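/- Let X = (X_1, X_2, …) be a sequence of ℝ^d-valued random vectors with partial sums S_n := X_1 + … + X_n, let A_n be invertible d×d real matrices with A_{n+1} A_n^{−1} → I, and let b_n ∈ ℝ^d; assume (i) X is strongly mixing, (ii) the triangular array (A_n X_j : 1 ≤ j ≤ n, n ≥ 1) is infinitesimal, and (iii) the distributions of A_n S_n + b_n converge weakly to a full probability measure μ on ℝ^d. Then for every nonzero idempotent matrix J ∈ D(μ) there exist matrices T_n ∈ D(μ), n = 1, 2, …, such that J T_n = T_n J = T_n for every n, T_n → J as n → ∞, and for each fixed n, T_n^k → 0 as k → ∞. -/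

import Mathlib

open MeasureTheory Filter Topology Matrix

/-- Convolution of two Borel measures on `ℝ^d`. -/
noncomputable def mconv {d : ℕ} (μ ν : Measure (Fin d → ℝ)) : Measure (Fin d → ℝ) :=
  (μ.prod ν).map (fun p => p.1 + p.2)

/-- The Urbanik decomposability semigroup `D(μ)`: all matrices `A` such that
`μ = (A_*μ) ∗ ν` for some probability measure `ν`. -/
def UrbanikD {d : ℕ} (μ : Measure (Fin d → ℝ)) : Set (Matrix (Fin d) (Fin d) ℝ) :=
  {A | ∃ ν : Measure (Fin d → ℝ), IsProbabilityMeasure ν ∧ μ = mconv (μ.map A.mulVec) ν}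

/-- A measure on `ℝ^d` is full if its support is not contained in any hyperplane,
i.e. no translate `v + L` of a proper linear subspace `L` carries all of its mass. -/
def IsFull {d : ℕ} (μ : Measure (Fin d → ℝ)) : Prop :=
  ∀ (v : Fin d → ℝ) (L : Submodule ℝ (Fin d → ℝ)), L ≠ ⊤ → μ {x | x - v ∈ L} < 1

/-- Weak convergence of a sequence of measures on `ℝ^d`. -/
def WeakLim {d : ℕ} (μs : ℕ → Measure (Fin d → ℝ)) (μ : Measure (Fin d → ℝ)) : Prop :=
  ∀ f : BoundedContinuousFunction (Fin d → ℝ) ℝ,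
    Tendsto (fun n => ∫ x, f x ∂(μs n)) atTop (𝓝 (∫ x, f x ∂μ))

/-- Partial sums `S_n = X_1 + ... + X_n`. -/
def partialSum {Ω : Type*} {d : ℕ} (X : ℕ → Ω → (Fin d → ℝ)) (n : ℕ) (ω : Ω) :
    Fin d → ℝ :=
  ∑ j ∈ Finset.Icc 1 n, X j ω

/-- The triangular array `(A_n X_j : 1 ≤ j ≤ n, n ≥ 1)` is infinitesimal:
`sup_{1 ≤ j ≤ n} P(‖A_n X_j‖ ≥ ε) → 0` as `n → ∞`, for every `ε > 0`. -/
def Infinitesimal {Ω : Type*} [MeasurableSpace Ω] {d : ℕ} (P : Measure Ω)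
    (A : ℕ → Matrix (Fin d) (Fin d) ℝ) (X : ℕ → Ω → (Fin d → ℝ)) : Prop :=
  ∀ ε > (0 : ℝ), ∀ δ > (0 : ℝ), ∃ N : ℕ, ∀ n ≥ N, ∀ j : ℕ, 1 ≤ j → j ≤ n →
    (P {ω | ε ≤ ‖(A n).mulVec (X j ω)‖}).toReal < δ

/-- Rosenblatt's measure of dependence `α(𝒜, ℬ)` between two sub-σ-fields. -/
noncomputable def alphaSig {Ω : Type*} [MeasurableSpace Ω] (P : Measure Ω)
    (m₁ m₂ : MeasurableSpace Ω) : ℝ :=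
  sSup {r | ∃ A B : Set Ω, MeasurableSet[m₁] A ∧ MeasurableSet[m₂] B ∧
    r = |(P (A ∩ B)).toReal - (P A).toReal * (P B).toReal|}

/-- The strong mixing coefficient `α(X; n) = sup_{j ≥ 1} α(σ(X_k, 1 ≤ k ≤ j), σ(X_k, k ≥ j+n))`. -/
noncomputable def alphaMix {Ω : Type*} [MeasurableSpace Ω] {d : ℕ} (P : Measure Ω)
    (X : ℕ → Ω → (Fin d → ℝ)) (n : ℕ) : ℝ :=
  ⨆ j : {j : ℕ // 1 ≤ j}, alphaSig P
    (⨆ k ∈ Set.Icc 1 (j : ℕ), MeasurableSpace.comap (X k) inferInstance)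
    (⨆ k ∈ Set.Ici ((j : ℕ) + n), MeasurableSpace.comap (X k) inferInstance)

/-- The sequence `X = (X_1, X_2, ...)` is strongly mixing: `α(X; n) → 0`. -/
def StronglyMixing {Ω : Type*} [MeasurableSpace Ω] {d : ℕ} (P : Measure Ω)
    (X : ℕ → Ω → (Fin d → ℝ)) : Prop :=
  Tendsto (alphaMix P X) atTop (𝓝 0)

section

open Complex
open scoped Matrix.Norms.Operator

/-- The characteristic function of a measure on `ℝ^d`. -/
noncomputable def cf {d : ℕ} (μ : Measure (Fin d → ℝ)) (t : Fin d → ℝ) : ℂ :=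
  ∫ x, exp ((t ⬝ᵥ x : ℝ) * I) ∂μ

lemma continuous_dotChar {d : ℕ} (t : Fin d → ℝ) :
    Continuous fun x : Fin d → ℝ => exp ((t ⬝ᵥ x : ℝ) * I) := by
  fun_prop

lemma integrable_dotChar {d : ℕ} (μ : Measure (Fin d → ℝ)) [IsFiniteMeasure μ] (t : Fin d → ℝ) :
    Integrable (fun x : Fin d → ℝ => exp ((t ⬝ᵥ x : ℝ) * I)) μ :=
  (integrable_const (1 : ℝ)).mono' (continuous_dotChar t).aestronglyMeasurable
    (.of_forall fun _ => (norm_exp_ofReal_mul_I _).le)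

lemma cf_map {d : ℕ} {Ω : Type*} [MeasurableSpace Ω] (P : Measure Ω) {Y : Ω → Fin d → ℝ}
    (hY : Measurable Y) (t : Fin d → ℝ) :
    cf (P.map Y) t = ∫ ω, exp ((t ⬝ᵥ Y ω : ℝ) * I) ∂P :=
  integral_map hY.aemeasurable (continuous_dotChar t).aestronglyMeasurable

lemma measurable_mulVec {d : ℕ} (A : Matrix (Fin d) (Fin d) ℝ) : Measurable A.mulVec :=
  (by fun_prop : Continuous fun x => A *ᵥ x).measurable

lemma cf_map_mulVec {d : ℕ} (μ : Measure (Fin d → ℝ)) (A : Matrix (Fin d) (Fin d) ℝ)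
    (t : Fin d → ℝ) : cf (μ.map A.mulVec) t = cf μ (Aᵀ *ᵥ t) := by
  rw [cf_map μ (measurable_mulVec A), cf]
  simp_rw [Matrix.dotProduct_mulVec, Matrix.mulVec_transpose]

lemma cf_mconv {d : ℕ} (μ ν : Measure (Fin d → ℝ)) [IsFiniteMeasure μ] [IsFiniteMeasure ν]
    (t : Fin d → ℝ) : cf (mconv μ ν) t = cf μ t * cf ν t := by
  rw [mconv, cf_map _ (by fun_prop), cf, cf, ← integral_prod_mul]
  simp_rw [dotProduct_add, ofReal_add, add_mul, Complex.exp_add]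

lemma cf_zero {d : ℕ} (μ : Measure (Fin d → ℝ)) [IsProbabilityMeasure μ] : cf μ 0 = 1 := by
  simp [cf]

lemma norm_cf_le_one {d : ℕ} (μ : Measure (Fin d → ℝ)) [IsProbabilityMeasure μ]
    (t : Fin d → ℝ) : ‖cf μ t‖ ≤ 1 := by
  refine (norm_integral_le_of_norm_le_const
    (.of_forall fun _ => (norm_exp_ofReal_mul_I _).le)).trans ?_
  simp

lemma ext_of_cf {d : ℕ} {μ ν : Measure (Fin d → ℝ)} [IsFiniteMeasure μ] [IsFiniteMeasure ν]
    (h : ∀ t, cf μ t = cf ν t) : μ = ν := by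
  refine Measure.ext_of_charFunDual (funext fun L => ?_)
  have hL : ∀ x, L x = (fun i => L (Pi.single i 1)) ⬝ᵥ x := fun x => by
    conv_lhs => rw [pi_eq_sum_univ' x]
    simp [dotProduct, mul_comm]
  have key : ∀ ρ : Measure (Fin d → ℝ), charFunDual ρ L = cf ρ fun i => L (Pi.single i 1) :=
    fun ρ => by simp_rw [charFunDual_apply, cf, ← hL]
  rw [key, key, h]

lemma mem_UrbanikD_iff {d : ℕ} {μ : Measure (Fin d → ℝ)} [IsProbabilityMeasure μ]
    {A : Matrix (Fin d) (Fin d) ℝ} :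
    A ∈ UrbanikD μ ↔ ∃ ν : Measure (Fin d → ℝ), IsProbabilityMeasure ν ∧
      ∀ t, cf μ t = cf μ (Aᵀ *ᵥ t) * cf ν t := by
  have : IsProbabilityMeasure (μ.map A.mulVec) :=
    Measure.isProbabilityMeasure_map (measurable_mulVec A).aemeasurable
  refine exists_congr fun ν => and_congr_right fun hν => ?_
  have : IsProbabilityMeasure (mconv (μ.map A.mulVec) ν) :=
    Measure.isProbabilityMeasure_map (by fun_prop)
  simp_rw [← cf_map_mulVec, ← cf_mconv]
  exact ⟨fun h t => by rw [← h], ext_of_cf⟩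

lemma weakLim_iff {d : ℕ} {μs : ℕ → ProbabilityMeasure (Fin d → ℝ)}
    {μ : ProbabilityMeasure (Fin d → ℝ)} :
    WeakLim (fun n => (μs n : Measure (Fin d → ℝ))) μ ↔ Tendsto μs atTop (𝓝 μ) :=
  ProbabilityMeasure.tendsto_iff_forall_integral_tendsto.symm

lemma WeakLim.tendsto_cf {d : ℕ} {μs : ℕ → Measure (Fin d → ℝ)} {μ : Measure (Fin d → ℝ)}
    [∀ n, IsProbabilityMeasure (μs n)] [IsProbabilityMeasure μ] (h : WeakLim μs μ)
    {ts : ℕ → Fin d → ℝ} {t : Fin d → ℝ} (ht : Tendsto ts atTop (𝓝 t)) :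
    Tendsto (fun n => cf (μs n) (ts n)) atTop (𝓝 (cf μ t)) := by
  let νs : ℕ → ProbabilityMeasure (Fin d → ℝ) := fun n => ⟨μs n, inferInstance⟩
  let ν₀ : ProbabilityMeasure (Fin d → ℝ) := ⟨μ, inferInstance⟩
  have h₁ : Tendsto νs atTop (𝓝 ν₀) := weakLim_iff.1 h
  have h₂ := (ProbabilityMeasure.continuous_prod.tendsto _).comp
    (h₁.prodMk_nhds ((continuous_diracProba.tendsto t).comp ht))
  rw [ProbabilityMeasure.tendsto_iff_forall_integral_rclike_tendsto ℂ] at h₂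
  let f : BoundedContinuousFunction ((Fin d → ℝ) × (Fin d → ℝ)) ℂ :=
    BoundedContinuousFunction.ofNormedAddCommGroup
      (fun p => exp ((p.2 ⬝ᵥ p.1 : ℝ) * I)) (by fun_prop) 1
      fun p => (norm_exp_ofReal_mul_I _).le
  have key : ∀ (ν : Measure (Fin d → ℝ)) (_ : IsProbabilityMeasure ν) (s : Fin d → ℝ),
      ∫ p, f p ∂(ν.prod (Measure.dirac s)) = cf ν s := fun ν _ s => by
    rw [integral_prod _ (f.integrable _)]
    simp [f, cf]
  have h₃ := h₂ f
  refine (h₃.congr fun n => ?_).trans (le_of_eq ?_)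
  · exact key (μs n) inferInstance (ts n)
  · exact congrArg 𝓝 (key μ inferInstance t)

lemma WeakLim.isTight {d : ℕ} {μs : ℕ → Measure (Fin d → ℝ)} {μ : Measure (Fin d → ℝ)}
    [∀ n, IsProbabilityMeasure (μs n)] [IsProbabilityMeasure μ] (h : WeakLim μs μ) :
    IsTightMeasureSet (Set.range μs) := by
  let ν : ℕ → ProbabilityMeasure (Fin d → ℝ) := fun n => ⟨μs n, inferInstance⟩
  have h₁ : Tendsto ν atTop (𝓝 ⟨μ, inferInstance⟩) := weakLim_iff.1 h
  refine (isTightMeasureSet_of_isCompact_closure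
    (h₁.isCompact_insert_range.closure_of_subset (Set.subset_insert _ _))).subset ?_
  rintro _ ⟨n, rfl⟩
  exact ⟨ν n, ⟨n, rfl⟩, rfl⟩

lemma exists_weakLim_subseq {d : ℕ} {μs : ℕ → Measure (Fin d → ℝ)}
    [∀ n, IsProbabilityMeasure (μs n)] (h : IsTightMeasureSet (Set.range μs)) :
    ∃ (ν : Measure (Fin d → ℝ)) (φ : ℕ → ℕ), IsProbabilityMeasure ν ∧ StrictMono φ ∧
      WeakLim (μs ∘ φ) ν := by
  let νs : ℕ → ProbabilityMeasure (Fin d → ℝ) := fun n => ⟨μs n, inferInstance⟩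
  have hc : IsCompact (closure (Set.range νs)) := isCompact_closure_of_isTightMeasureSet <|
    h.subset <| by rintro _ ⟨_, ⟨n, rfl⟩, rfl⟩; exact ⟨n, rfl⟩
  obtain ⟨ν, -, φ, hφ, hlim⟩ := hc.isSeqCompact (fun n => subset_closure ⟨n, rfl⟩)
  exact ⟨ν, φ, inferInstance, hφ, weakLim_iff.2 hlim⟩

lemma WeakLim.comp {d : ℕ} {μs : ℕ → Measure (Fin d → ℝ)} {μ : Measure (Fin d → ℝ)}
    (h : WeakLim μs μ) {φ : ℕ → ℕ} (hφ : Tendsto φ atTop atTop) :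
    WeakLim (fun n => μs (φ n)) μ :=
  fun f => (h f).comp hφ

lemma cf_neg {d : ℕ} (μ : Measure (Fin d → ℝ)) (t : Fin d → ℝ) :
    cf μ (-t) = (starRingEnd ℂ) (cf μ t) := by
  simp_rw [cf, ← integral_conj, ← Complex.exp_conj]
  simp

/-- A full measure has no direction in which its characteristic function has modulus one. -/
lemma IsFull.eq_zero_of_norm_cf {d : ℕ} {μ : Measure (Fin d → ℝ)} [IsProbabilityMeasure μ]
    (hμ : IsFull μ) {w : Fin d → ℝ} (h : ∀ s : ℝ, 1 ≤ ‖cf μ (s • w)‖) : w = 0 := by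
  have hm : Measurable fun p : (Fin d → ℝ) × (Fin d → ℝ) => w ⬝ᵥ (p.1 - p.2) :=
    (by fun_prop : Continuous fun p : (Fin d → ℝ) × (Fin d → ℝ) => w ⬝ᵥ (p.1 - p.2)).measurable
  have hdirac : (μ.prod μ).map (fun p => w ⬝ᵥ (p.1 - p.2)) = Measure.dirac 0 := by
    have := Measure.isProbabilityMeasure_map (μ := μ.prod μ) hm.aemeasurable
    refine Measure.ext_of_charFun (funext fun s => ?_)
    have h1 : cf μ (s • w) * cf μ (-(s • w)) = 1 := by
      rw [cf_neg, Complex.mul_conj, Complex.normSq_eq_norm_sq,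
        le_antisymm (norm_cf_le_one μ _) (h s)]
      simp
    rw [charFun_dirac, charFun_apply_real,
      integral_map hm.aemeasurable (by fun_prop : Continuous _).aestronglyMeasurable]
    simp only [inner_zero_left, ofReal_zero, zero_mul, Complex.exp_zero]
    rw [← h1, cf, cf, ← integral_prod_mul]
    refine integral_congr_ae (.of_forall fun p => ?_)
    simp only [← Complex.exp_add]
    congr 1
    simp [dotProduct_sub, smul_dotProduct]
    ring
  have hae : ∀ᵐ p ∂(μ.prod μ), w ⬝ᵥ (p.1 - p.2) = 0 := by
    refine ae_of_ae_map (p := fun x => x = 0) hm.aemeasurable ?_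
    rw [hdirac, ae_dirac_eq]
    exact Filter.eventually_pure.2 rfl
  obtain ⟨x, hx⟩ := (Measure.ae_ae_of_ae_prod hae).exists
  by_contra hw
  let L : Submodule ℝ (Fin d → ℝ) := LinearMap.ker (dotProductBilin ℝ ℝ w)
  have hL : L ≠ ⊤ := fun hL => hw <| dotProduct_self_eq_zero.1 <|
    show w ∈ L from hL ▸ Submodule.mem_top
  refine (hμ x L hL).ne (prob_compl_eq_zero_iff₀ ?_ |>.1 ?_)
  · exact ((Submodule.closed_of_finiteDimensional L).measurableSet.preimage
      (by fun_prop : Measurable fun y => y - x)).nullMeasurableSet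
  · refine mem_ae_iff.1 (hx.mono fun y hy => ?_)
    have : w ⬝ᵥ (y - x) = 0 := by
      rw [← neg_sub, dotProduct_neg, hy, neg_zero]
    exact this

section AsymptoticDecomposition

variable {d : ℕ} {μ : Measure (Fin d → ℝ)} [IsProbabilityMeasure μ]
  {C : ℕ → Matrix (Fin d) (Fin d) ℝ} {ρ : ℕ → Measure ((Fin d → ℝ) × (Fin d → ℝ))}
  [∀ k, IsProbabilityMeasure (ρ k)] {ε : ℕ → ℝ}

lemma isProbabilityMeasure_map_mulVec_add (ρ : Measure ((Fin d → ℝ) × (Fin d → ℝ)))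
    [IsProbabilityMeasure ρ] (C : Matrix (Fin d) (Fin d) ℝ) :
    IsProbabilityMeasure (ρ.map fun p => C *ᵥ p.1 + p.2) :=
  Measure.isProbabilityMeasure_map
    (by fun_prop : Continuous fun p : (Fin d → ℝ) × (Fin d → ℝ) => C *ᵥ p.1 + p.2).aemeasurable

lemma isTight_snd_of_asymptotic_decomposition {B : Matrix (Fin d) (Fin d) ℝ}
    (hC : Tendsto C atTop (𝓝 B)) (hW : WeakLim (fun k => (ρ k).fst) μ)
    (hZ : WeakLim (fun k => (ρ k).map fun p => C k *ᵥ p.1 + p.2) μ) :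
    IsTightMeasureSet (Set.range fun k => (ρ k).snd) := by
  have := fun k => isProbabilityMeasure_map_mulVec_add (ρ k) (C k)
  rw [isTightMeasureSet_iff_exists_isCompact_measure_compl_le]
  intro δ hδ
  obtain ⟨K₁, hK₁, h₁⟩ := isTightMeasureSet_iff_exists_isCompact_measure_compl_le.1
    hW.isTight (δ / 2) (ENNReal.half_pos hδ.ne')
  obtain ⟨K₂, hK₂, h₂⟩ := isTightMeasureSet_iff_exists_isCompact_measure_compl_le.1
    hZ.isTight (δ / 2) (ENNReal.half_pos hδ.ne')
  refine ⟨(fun q : (Fin d → ℝ) × Matrix (Fin d) (Fin d) ℝ × (Fin d → ℝ) => q.1 - q.2.1 *ᵥ q.2.2) ''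
    (K₂ ×ˢ (insert B (Set.range C)) ×ˢ K₁),
    (hK₂.prod (hC.isCompact_insert_range.prod hK₁)).image (by fun_prop), ?_⟩
  rintro _ ⟨k, rfl⟩
  set K := (fun q : (Fin d → ℝ) × Matrix (Fin d) (Fin d) ℝ × (Fin d → ℝ) =>
    q.1 - q.2.1 *ᵥ q.2.2) '' (K₂ ×ˢ (insert B (Set.range C)) ×ˢ K₁) with hK
  have hKc : IsCompact K :=
    (hK₂.prod (hC.isCompact_insert_range.prod hK₁)).image (by fun_prop)
  rw [Measure.snd_apply hKc.measurableSet.compl]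
  have hZm : Measurable fun p : (Fin d → ℝ) × (Fin d → ℝ) => C k *ᵥ p.1 + p.2 :=
    (by fun_prop : Continuous _).measurable
  calc ρ k (Prod.snd ⁻¹' Kᶜ)
      ≤ ρ k ((Prod.fst ⁻¹' K₁ᶜ) ∪ ((fun p => C k *ᵥ p.1 + p.2) ⁻¹' K₂ᶜ)) := by
        refine measure_mono fun p hp => ?_
        by_contra hcon
        simp only [Set.mem_union, Set.mem_preimage, Set.mem_compl_iff, not_or, not_not] at hcon hp
        exact hp ⟨(C k *ᵥ p.1 + p.2, C k, p.1),
          ⟨hcon.2, Set.mem_insert_of_mem _ ⟨k, rfl⟩, hcon.1⟩, by simp⟩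
    _ ≤ δ / 2 + δ / 2 := by
        refine (measure_union_le _ _).trans (add_le_add ?_ ?_)
        · rw [← Measure.fst_apply hK₁.measurableSet.compl]
          exact h₁ _ ⟨k, rfl⟩
        · rw [← Measure.map_apply hZm hK₂.measurableSet.compl]
          exact h₂ _ ⟨k, rfl⟩
    _ = δ := ENNReal.add_halves δ

lemma mem_UrbanikD_of_asymptotic_decomposition {B : Matrix (Fin d) (Fin d) ℝ}
    (hC : Tendsto C atTop (𝓝 B)) (hW : WeakLim (fun k => (ρ k).fst) μ)
    (hZ : WeakLim (fun k => (ρ k).map fun p => C k *ᵥ p.1 + p.2) μ)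
    (hε : Tendsto ε atTop (𝓝 0))
    (hind : ∀ k t, ‖cf ((ρ k).map fun p => C k *ᵥ p.1 + p.2) t -
      cf (ρ k).fst ((C k)ᵀ *ᵥ t) * cf (ρ k).snd t‖ ≤ ε k) :
    B ∈ UrbanikD μ := by
  have := fun k => isProbabilityMeasure_map_mulVec_add (ρ k) (C k)
  obtain ⟨ν, φ, hν, hφ, hlim⟩ :=
    exists_weakLim_subseq (isTight_snd_of_asymptotic_decomposition hC hW hZ)
  refine mem_UrbanikD_iff.2 ⟨ν, hν, fun t => ?_⟩
  have hφ' := hφ.tendsto_atTop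
  have hCt : Tendsto (fun k => (C (φ k))ᵀ *ᵥ t) atTop (𝓝 (Bᵀ *ᵥ t)) :=
    ((by fun_prop : Continuous fun M : Matrix (Fin d) (Fin d) ℝ => Mᵀ *ᵥ t).tendsto B).comp
      (hC.comp hφ')
  have l₁ := (hZ.comp hφ').tendsto_cf (tendsto_const_nhds (x := t))
  have l₂ := (hW.comp hφ').tendsto_cf hCt
  have l₃ := WeakLim.tendsto_cf (μs := fun k => (ρ (φ k)).snd) hlim (tendsto_const_nhds (x := t))
  refine sub_eq_zero.1 (tendsto_nhds_unique (l₁.sub (l₂.mul l₃)) ?_)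
  exact squeeze_zero_norm (fun k => hind (φ k) t) (hε.comp hφ')

lemma not_tendsto_norm_of_asymptotic_decomposition (hμ : IsFull μ)
    (hW : WeakLim (fun k => (ρ k).fst) μ)
    (hZ : WeakLim (fun k => (ρ k).map fun p => C k *ᵥ p.1 + p.2) μ)
    (hε : Tendsto ε atTop (𝓝 0))
    (hind : ∀ k t, ‖cf ((ρ k).map fun p => C k *ᵥ p.1 + p.2) t -
      cf (ρ k).fst ((C k)ᵀ *ᵥ t) * cf (ρ k).snd t‖ ≤ ε k) :
    ¬ Tendsto (fun k => ‖C k‖) atTop atTop := by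
  intro hC
  have := fun k => isProbabilityMeasure_map_mulVec_add (ρ k) (C k)
  have hball : ∀ k, ‖C k‖⁻¹ • C k ∈ Metric.closedBall (0 : Matrix (Fin d) (Fin d) ℝ) 1 := fun k => by
    rw [mem_closedBall_zero_iff, norm_smul, norm_inv, norm_norm]
    exact inv_mul_le_one
  obtain ⟨E, -, φ, hφ, hE⟩ := tendsto_subseq_of_bounded Metric.isBounded_closedBall hball
  have hC' := hC.comp hφ.tendsto_atTop
  have hE1 : ‖E‖ = 1 := by
    refine tendsto_nhds_unique hE.norm (tendsto_const_nhds.congr' ?_)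
    filter_upwards [hC'.eventually_gt_atTop 0] with k hk
    simp only [Function.comp_apply] at hk ⊢
    rw [norm_smul, norm_inv, norm_norm, inv_mul_cancel₀ hk.ne']
  have hE0 : ∀ u, Eᵀ *ᵥ u = 0 := fun u => by
    refine hμ.eq_zero_of_norm_cf fun s => ?_
    have ht : Tendsto (fun k => (s * ‖C (φ k)‖⁻¹) • u) atTop (𝓝 0) := by
      simpa using (hC'.inv_tendsto_atTop.const_mul s).smul_const u
    have hCt : Tendsto (fun k => (C (φ k))ᵀ *ᵥ ((s * ‖C (φ k)‖⁻¹) • u)) atTop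
        (𝓝 (s • (Eᵀ *ᵥ u))) := by
      refine (((by fun_prop : Continuous fun M : Matrix (Fin d) (Fin d) ℝ =>
        s • (Mᵀ *ᵥ u)).tendsto E).comp hE).congr fun k => ?_
      simp [Matrix.transpose_smul, Matrix.smul_mulVec, Matrix.mulVec_smul, mul_smul]
    have l₁ := ((hZ.comp hφ.tendsto_atTop).tendsto_cf ht).norm
    have l₂ := ((hW.comp hφ.tendsto_atTop).tendsto_cf hCt).norm
    rw [cf_zero, norm_one] at l₁
    have l₃ := (hε.comp hφ.tendsto_atTop).add l₂
    rw [zero_add] at l₃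
    refine le_of_tendsto_of_tendsto' l₁ l₃ fun k => ?_
    refine (norm_le_norm_sub_add _ _).trans (add_le_add (hind (φ k) _) ?_)
    rw [norm_mul]
    exact mul_le_of_le_one_right (norm_nonneg _) (norm_cf_le_one _ _)
  have : E = 0 := Matrix.transpose_eq_zero.1 (Matrix.ext_of_mulVec_single fun i => by
    rw [hE0, Matrix.zero_mulVec])
  simp [this] at hE1

lemma exists_subseq_tendsto_mem_UrbanikD (hμ : IsFull μ)
    (hW : WeakLim (fun k => (ρ k).fst) μ)
    (hZ : WeakLim (fun k => (ρ k).map fun p => C k *ᵥ p.1 + p.2) μ)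
    (hε : Tendsto ε atTop (𝓝 0))
    (hind : ∀ k t, ‖cf ((ρ k).map fun p => C k *ᵥ p.1 + p.2) t -
      cf (ρ k).fst ((C k)ᵀ *ᵥ t) * cf (ρ k).snd t‖ ≤ ε k) :
    ∃ B ∈ UrbanikD μ, ∃ φ : ℕ → ℕ, StrictMono φ ∧ Tendsto (C ∘ φ) atTop (𝓝 B) := by
  have hnt := not_tendsto_norm_of_asymptotic_decomposition hμ hW hZ hε hind
  rw [tendsto_atTop] at hnt
  push Not at hnt
  obtain ⟨M, hM⟩ := hnt
  have hfr : ∃ᶠ k in atTop, C k ∈ Metric.closedBall (0 : Matrix (Fin d) (Fin d) ℝ) M :=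
    hM.mono fun k hk => by
      rw [mem_closedBall_zero_iff]; exact hk.le
  obtain ⟨B, -, φ, hφ, hB⟩ := tendsto_subseq_of_frequently_bounded Metric.isBounded_closedBall hfr
  exact ⟨B, mem_UrbanikD_of_asymptotic_decomposition (ρ := fun k => ρ (φ k)) (ε := ε ∘ φ) hB
    (hW.comp hφ.tendsto_atTop) (hZ.comp hφ.tendsto_atTop) (hε.comp hφ.tendsto_atTop)
    (fun k => hind (φ k)), φ, hφ, hB⟩

end AsymptoticDecomposition

section Semigroup

variable {d : ℕ} {μ : Measure (Fin d → ℝ)} [IsProbabilityMeasure μ]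
  {K S T : Matrix (Fin d) (Fin d) ℝ}

lemma UrbanikD.zero_mem : (0 : Matrix (Fin d) (Fin d) ℝ) ∈ UrbanikD μ :=
  mem_UrbanikD_iff.2 ⟨μ, inferInstance, fun t => by simp [cf_zero]⟩

lemma UrbanikD.mul_mem (hS : S ∈ UrbanikD μ) (hT : T ∈ UrbanikD μ) : S * T ∈ UrbanikD μ := by
  obtain ⟨ν₁, h₁, hν₁⟩ := mem_UrbanikD_iff.1 hS
  obtain ⟨ν₂, h₂, hν₂⟩ := mem_UrbanikD_iff.1 hT
  have : IsProbabilityMeasure (ν₂.map S.mulVec) :=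
    Measure.isProbabilityMeasure_map (measurable_mulVec S).aemeasurable
  refine mem_UrbanikD_iff.2 ⟨mconv (ν₂.map S.mulVec) ν₁,
    Measure.isProbabilityMeasure_map (by fun_prop), fun t => ?_⟩
  rw [cf_mconv, cf_map_mulVec, hν₁ t, hν₂ (Sᵀ *ᵥ t), Matrix.mulVec_mulVec, Matrix.transpose_mul,
    mul_assoc]

lemma isCompact_UrbanikD (hμ : IsFull μ) : IsCompact (UrbanikD μ) := by
  have : TopologicalSpace.PseudoMetrizableSpace (Matrix (Fin d) (Fin d) ℝ) :=
    inferInstanceAs (TopologicalSpace.PseudoMetrizableSpace (Fin d → Fin d → ℝ))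
  refine IsSeqCompact.isCompact fun C hC => ?_
  choose ν hν hcf using fun k => mem_UrbanikD_iff.1 (hC k)
  have hcfZ : ∀ k t, cf ((μ.prod (ν k)).map fun p => C k *ᵥ p.1 + p.2) t = cf μ t :=
    fun k t => by
    have hZm : Measurable fun p : (Fin d → ℝ) × (Fin d → ℝ) => C k *ᵥ p.1 + p.2 :=
      (by fun_prop : Continuous _).measurable
    rw [hcf k t, ← cf_map_mulVec, cf_map _ hZm, cf_map _ (measurable_mulVec _), cf,
      ← integral_prod_mul]
    simp_rw [dotProduct_add, ofReal_add, add_mul, Complex.exp_add]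
  have hZ : ∀ k, (μ.prod (ν k)).map (fun p => C k *ᵥ p.1 + p.2) = μ := fun k => by
    have := isProbabilityMeasure_map_mulVec_add (μ.prod (ν k)) (C k)
    exact ext_of_cf (hcfZ k)
  refine exists_subseq_tendsto_mem_UrbanikD (ρ := fun k => μ.prod (ν k)) (ε := fun _ => 0) hμ
    ?_ ?_ tendsto_const_nhds fun k t => ?_
  · simp only [Measure.fst_prod]
    exact fun f => tendsto_const_nhds
  · simp only [hZ]
    exact fun f => tendsto_const_nhds
  · rw [hcfZ, Measure.fst_prod, Measure.snd_prod, hcf k t, sub_self, norm_zero]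

lemma continuous_cf (μ : Measure (Fin d → ℝ)) [IsProbabilityMeasure μ] : Continuous (cf μ) :=
  continuous_iff_seqContinuous.2 fun _ _ ht =>
    WeakLim.tendsto_cf (μs := fun _ => μ) (fun _ => tendsto_const_nhds) ht

lemma ae_eq_one_of_cf_eq_one {ν : Measure (Fin d → ℝ)} [IsProbabilityMeasure ν] {t : Fin d → ℝ}
    (h : cf ν t = 1) : ∀ᵐ x ∂ν, exp ((t ⬝ᵥ x : ℝ) * I) = 1 := by
  have hre : ∀ x : Fin d → ℝ, (exp ((t ⬝ᵥ x : ℝ) * I)).re = Real.cos (t ⬝ᵥ x) :=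
    fun x => exp_ofReal_mul_I_re _
  have hint : Integrable (fun x => Real.cos (t ⬝ᵥ x)) ν := by
    simpa only [RCLike.re_eq_complex_re, hre] using (integrable_dotChar ν t).re
  have h0 : ∫ x, (1 - Real.cos (t ⬝ᵥ x)) ∂ν = 0 := by
    rw [integral_sub (integrable_const 1) hint]
    simp_rw [← hre]
    have := integral_re (integrable_dotChar ν t)
    simp only [RCLike.re_eq_complex_re] at this
    rw [this, ← cf, h]
    simp
  have hae := (integral_eq_zero_iff_of_nonneg (fun x => sub_nonneg.2 (Real.cos_le_one _))
    ((integrable_const 1).sub hint)).1 h0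
  filter_upwards [hae] with x hx
  have hc : Real.cos (t ⬝ᵥ x) = 1 := (sub_eq_zero.1 hx).symm
  have hs : Real.sin (t ⬝ᵥ x) = 0 := Real.sin_eq_zero_iff_cos_eq.2 (.inl hc)
  rw [exp_mul_I, ← ofReal_cos, ← ofReal_sin, hc, hs]
  simp

/-- An idempotent in the decomposability semigroup splits the measure into independent parts. -/
lemma cf_eq_mul_of_idempotent (hK : K ∈ UrbanikD μ) (hKK : K * K = K) (t : Fin d → ℝ) :
    cf μ t = cf μ (Kᵀ *ᵥ t) * cf μ ((1 - K)ᵀ *ᵥ t) := by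
  obtain ⟨ν, hν, h⟩ := mem_UrbanikD_iff.1 hK
  have hKt : Kᵀ * Kᵀ = Kᵀ := by rw [← Matrix.transpose_mul, hKK]
  have hnear : ∀ᶠ s in 𝓝 (0 : Fin d → ℝ), cf ν (Kᵀ *ᵥ s) = 1 := by
    have hcont : Tendsto (fun s => cf μ (Kᵀ *ᵥ s)) (𝓝 0) (𝓝 1) := by
      have := ((continuous_cf μ).comp (by fun_prop : Continuous fun s => Kᵀ *ᵥ s)).tendsto 0
      simpa [cf_zero, Function.comp_def] using this
    filter_upwards [hcont.eventually_ne one_ne_zero] with s hs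
    have := h (Kᵀ *ᵥ s)
    rw [Matrix.mulVec_mulVec, hKt] at this
    exact mul_left_cancel₀ hs (by rw [mul_one, ← this])
  have hae : ∀ᵐ x ∂ν, exp ((Kᵀ *ᵥ t ⬝ᵥ x : ℝ) * I) = 1 := by
    have hlim : Tendsto (fun n : ℕ => ((n : ℝ) + 1)⁻¹ • t) atTop (𝓝 0) := by
      simpa using (tendsto_one_div_add_atTop_nhds_zero_nat (𝕜 := ℝ)).smul_const t
    obtain ⟨n, hn⟩ := (hlim.eventually hnear).exists
    filter_upwards [ae_eq_one_of_cf_eq_one hn] with x hx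
    have hpow := congrArg (· ^ (n + 1)) hx
    simp only [one_pow, ← Complex.exp_nat_mul] at hpow
    rw [← hpow]
    congr 1
    rw [Matrix.mulVec_smul, smul_dotProduct, smul_eq_mul]
    push_cast
    have : (n : ℂ) + 1 ≠ 0 := by exact_mod_cast n.succ_ne_zero
    field_simp
  have hsplit : cf ν t = cf ν ((1 - K)ᵀ *ᵥ t) := by
    refine integral_congr_ae ?_
    filter_upwards [hae] with x hx
    have : t ⬝ᵥ x = (1 - K)ᵀ *ᵥ t ⬝ᵥ x + Kᵀ *ᵥ t ⬝ᵥ x := by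
      rw [← add_dotProduct, ← Matrix.add_mulVec, ← Matrix.transpose_add]
      simp
    rw [this, ofReal_add, add_mul, Complex.exp_add, hx, mul_one]
  have hcompl : cf μ ((1 - K)ᵀ *ᵥ t) = cf ν ((1 - K)ᵀ *ᵥ t) := by
    rw [h, Matrix.mulVec_mulVec, ← Matrix.transpose_mul, sub_mul, hKK]
    simp [cf_zero]
  rw [hcompl, ← hsplit]
  exact h t

lemma UrbanikD.one_sub_mem (hK : K ∈ UrbanikD μ) (hKK : K * K = K) : 1 - K ∈ UrbanikD μ :=
  mem_UrbanikD_iff.2 ⟨μ.map K.mulVec,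
    Measure.isProbabilityMeasure_map (measurable_mulVec K).aemeasurable, fun t => by
      rw [cf_map_mulVec, mul_comm]; exact cf_eq_mul_of_idempotent hK hKK t⟩

lemma UrbanikD.add_mem (hK : K ∈ UrbanikD μ) (hKK : K * K = K) (hS : S ∈ UrbanikD μ)
    (hT : T ∈ UrbanikD μ) (hKS : K * S = S) (hSK : S * K = S) (hKT : K * T = 0)
    (hTK : T * K = 0) : S + T ∈ UrbanikD μ := by
  obtain ⟨ν₁, h₁, hν₁⟩ := mem_UrbanikD_iff.1 hS
  obtain ⟨ν₂, h₂, hν₂⟩ := mem_UrbanikD_iff.1 hT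
  have : IsProbabilityMeasure (ν₁.map K.mulVec) :=
    Measure.isProbabilityMeasure_map (measurable_mulVec K).aemeasurable
  have : IsProbabilityMeasure (ν₂.map (1 - K).mulVec) :=
    Measure.isProbabilityMeasure_map (measurable_mulVec (1 - K)).aemeasurable
  refine mem_UrbanikD_iff.2 ⟨mconv (ν₁.map K.mulVec) (ν₂.map (1 - K).mulVec),
    Measure.isProbabilityMeasure_map (by fun_prop), fun t => ?_⟩
  have e₁ : (S + T) * K = S := by rw [add_mul, hSK, hTK, add_zero]
  have e₂ : (S + T) * (1 - K) = T := by rw [mul_sub, e₁, mul_one, add_sub_cancel_left]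
  have e₃ : (1 - K) * T = T := by rw [sub_mul, hKT, one_mul, sub_zero]
  rw [cf_mconv, cf_map_mulVec, cf_map_mulVec, cf_eq_mul_of_idempotent hK hKK t,
    cf_eq_mul_of_idempotent hK hKK ((S + T)ᵀ *ᵥ t), hν₁ (Kᵀ *ᵥ t), hν₂ ((1 - K)ᵀ *ᵥ t)]
  simp only [Matrix.mulVec_mulVec, ← Matrix.transpose_mul, e₁, e₂, e₃, hKS]
  ring

end Semigroup

section Mixing

variable {Ω : Type*} {m₁ m₂ : MeasurableSpace Ω} [m₀ : MeasurableSpace Ω] {P : Measure Ω}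
  [IsProbabilityMeasure P] {α : ℝ} {f g : Ω → ℝ}

lemma integrable_of_mem_Icc {a b : ℝ} (hf : Measurable f) (h : ∀ ω, f ω ∈ Set.Icc a b) :
    Integrable f P :=
  Integrable.of_mem_Icc a b hf.aemeasurable (.of_forall h)

lemma integral_mul_le_of_forall_setIntegral_le (hm : m₁ ≤ m₀) {h : Ω → ℝ} (hh : Integrable h P)
    (hα : ∀ s, MeasurableSet[m₁] s → ∫ ω in s, h ω ∂P ≤ α)
    (hf : Measurable[m₁] f) (hf01 : ∀ ω, f ω ∈ Set.Icc (0 : ℝ) 1) :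
    ∫ ω, f ω * h ω ∂P ≤ α := by
  have hfh : Integrable (f * h) P :=
    hh.bdd_mul (c := 1) (hf.mono hm le_rfl).aestronglyMeasurable (.of_forall fun ω => by
      rw [Real.norm_eq_abs, abs_le]; exact ⟨by linarith [(hf01 ω).1], (hf01 ω).2⟩)
  have hce := condExp_mul_of_stronglyMeasurable_left (μ := P) hf.stronglyMeasurable hfh hh
  have hs : MeasurableSet[m₁] {ω | 0 ≤ (P[h|m₁]) ω} :=
    stronglyMeasurable_condExp.measurable measurableSet_Ici
  calc ∫ ω, f ω * h ω ∂P = ∫ ω, (P[f * h|m₁]) ω ∂P := (integral_condExp hm).symm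
    _ = ∫ ω, f ω * (P[h|m₁]) ω ∂P := integral_congr_ae hce
    _ ≤ ∫ ω, Set.indicator {ω | 0 ≤ (P[h|m₁]) ω} (P[h|m₁]) ω ∂P := by
        refine integral_mono_ae ?_ (integrable_condExp.indicator (hm _ hs)) (.of_forall fun ω => ?_)
        · exact integrable_condExp.congr hce
        · by_cases hω : 0 ≤ (P[h|m₁]) ω
          · simpa [Set.indicator, hω] using mul_le_of_le_one_left hω (hf01 ω).2
          · simpa [Set.indicator, hω] using
              mul_nonpos_of_nonneg_of_nonpos (hf01 ω).1 (not_le.1 hω).le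
    _ = ∫ ω in {ω | 0 ≤ (P[h|m₁]) ω}, h ω ∂P := by
        rw [integral_indicator (hm _ hs), setIntegral_condExp hm hh hs]
    _ ≤ α := hα _ hs

lemma abs_integral_mul_le_of_forall_setIntegral_le (hm : m₁ ≤ m₀) {h : Ω → ℝ}
    (hh : Integrable h P) (hα : ∀ s, MeasurableSet[m₁] s → |∫ ω in s, h ω ∂P| ≤ α)
    (hf : Measurable[m₁] f) (hf01 : ∀ ω, f ω ∈ Set.Icc (0 : ℝ) 1) :
    |∫ ω, f ω * h ω ∂P| ≤ α := by
  refine abs_le'.2 ⟨integral_mul_le_of_forall_setIntegral_le hm hh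
    (fun s hs => (le_abs_self _).trans (hα s hs)) hf hf01, ?_⟩
  rw [← integral_neg]
  simp_rw [← mul_neg]
  refine integral_mul_le_of_forall_setIntegral_le hm hh.neg (fun s hs => ?_) hf hf01
  rw [integral_neg]
  exact (neg_le_abs _).trans (hα s hs)

/-- Covariance bound for functions with values in `[0, 1]` under strong mixing. -/
lemma abs_covariance_le (hm₁ : m₁ ≤ m₀) (hm₂ : m₂ ≤ m₀)
    (hα : ∀ A B, MeasurableSet[m₁] A → MeasurableSet[m₂] B →
      |(P (A ∩ B)).toReal - (P A).toReal * (P B).toReal| ≤ α)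
    (hf : Measurable[m₁] f) (hf01 : ∀ ω, f ω ∈ Set.Icc (0 : ℝ) 1)
    (hg : Measurable[m₂] g) (hg01 : ∀ ω, g ω ∈ Set.Icc (0 : ℝ) 1) :
    |∫ ω, f ω * g ω ∂P - (∫ ω, f ω ∂P) * ∫ ω, g ω ∂P| ≤ α := by
  have hfi : Integrable f P := integrable_of_mem_Icc (hf.mono hm₁ le_rfl) hf01
  have hgi : Integrable g P := integrable_of_mem_Icc (hg.mono hm₂ le_rfl) hg01
  have hfgi : Integrable (fun ω => f ω * g ω) P := by
    refine integrable_of_mem_Icc (a := 0) (b := 1)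
      ((hf.mono hm₁ le_rfl).mul (hg.mono hm₂ le_rfl)) fun ω => ?_
    exact ⟨mul_nonneg (hf01 ω).1 (hg01 ω).1, mul_le_one₀ (hf01 ω).2 (hg01 ω).1 (hg01 ω).2⟩
  have hstep : ∀ B, MeasurableSet[m₂] B → |∫ ω in B, (f ω - ∫ ω', f ω' ∂P) ∂P| ≤ α := by
    intro B hB
    have hB' := hm₂ B hB
    have hBi : Integrable (B.indicator fun _ => (1 : ℝ)) P := (integrable_const 1).indicator hB'
    have key := abs_integral_mul_le_of_forall_setIntegral_le (P := P) (α := α) hm₁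
      (h := fun ω => B.indicator (fun _ => (1 : ℝ)) ω - P.real B)
      (hBi.sub (integrable_const _)) (fun A hA => ?_) hf hf01
    · have e₁ : ∀ ω, f ω * (B.indicator (fun _ => (1 : ℝ)) ω - P.real B) =
          B.indicator f ω - f ω * P.real B := fun ω => by
        by_cases h : ω ∈ B <;> simp [h, mul_sub]
      simp_rw [e₁] at key
      rw [integral_sub (hfi.indicator hB') (hfi.mul_const _), integral_indicator hB',
        integral_mul_const] at key
      rw [integral_sub hfi.integrableOn (integrable_const _), setIntegral_const, smul_eq_mul,
        mul_comm (P.real B)]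
      exact key
    · rw [integral_sub hBi.integrableOn (integrable_const _), setIntegral_const,
        setIntegral_indicator hB', setIntegral_const, smul_eq_mul, smul_eq_mul, mul_one]
      exact hα A B hA hB
  have key := abs_integral_mul_le_of_forall_setIntegral_le (P := P) hm₂
    (h := fun ω => f ω - ∫ ω', f ω' ∂P) (hfi.sub (integrable_const (∫ ω', f ω' ∂P))) hstep hg hg01
  have e₁ : ∀ ω, g ω * (f ω - ∫ ω', f ω' ∂P) =
      f ω * g ω - (∫ ω', f ω' ∂P) * g ω := fun ω => by ring
  simp_rw [e₁] at key
  rwa [integral_sub hfgi (hgi.const_mul _), integral_const_mul] at key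

/-- Covariance bound for functions with values in `[-1, 1]` under strong mixing. -/
lemma abs_covariance_le_four_mul (hm₁ : m₁ ≤ m₀) (hm₂ : m₂ ≤ m₀)
    (hα : ∀ A B, MeasurableSet[m₁] A → MeasurableSet[m₂] B →
      |(P (A ∩ B)).toReal - (P A).toReal * (P B).toReal| ≤ α)
    (hf : Measurable[m₁] f) (hf1 : ∀ ω, f ω ∈ Set.Icc (-1 : ℝ) 1)
    (hg : Measurable[m₂] g) (hg1 : ∀ ω, g ω ∈ Set.Icc (-1 : ℝ) 1) :
    |∫ ω, f ω * g ω ∂P - (∫ ω, f ω ∂P) * ∫ ω, g ω ∂P| ≤ 4 * α := by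
  have hfi : Integrable f P := integrable_of_mem_Icc (hf.mono hm₁ le_rfl) hf1
  have hgi : Integrable g P := integrable_of_mem_Icc (hg.mono hm₂ le_rfl) hg1
  have hfgi : Integrable (fun ω => f ω * g ω) P := hgi.bdd_mul (c := 1)
    (hf.mono hm₁ le_rfl).aestronglyMeasurable (.of_forall fun ω => abs_le.2 (hf1 ω))
  have key := abs_covariance_le (P := P) (f := fun ω => (f ω + 1) / 2)
    (g := fun ω => (g ω + 1) / 2) hm₁ hm₂ hα
    (Measurable.div_const (Measurable.add_const hf 1) 2)
    (fun ω => ⟨by linarith [(hf1 ω).1], by linarith [(hf1 ω).2]⟩)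
    (Measurable.div_const (Measurable.add_const hg 1) 2)
    (fun ω => ⟨by linarith [(hg1 ω).1], by linarith [(hg1 ω).2]⟩)
  have e₁ : ∀ ω, (f ω + 1) / 2 * ((g ω + 1) / 2) = (f ω * g ω + f ω + g ω + 1) / 4 :=
    fun ω => by ring
  simp_rw [e₁] at key
  have i₁ := hfgi.add hfi
  have i₂ := i₁.add hgi
  have e₂ : ∫ ω, (f ω * g ω + f ω + g ω + 1) ∂P =
      ∫ ω, f ω * g ω ∂P + ∫ ω, f ω ∂P + ∫ ω, g ω ∂P + 1 := by
    rw [integral_add (f := fun ω => f ω * g ω + f ω + g ω) i₂ (integrable_const _),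
      integral_add (f := fun ω => f ω * g ω + f ω) i₁ hgi, integral_add hfgi hfi]
    simp
  have e₃ : ∀ h : Ω → ℝ, Integrable h P → ∫ ω, (h ω + 1) ∂P = ∫ ω, h ω ∂P + 1 := fun h hh => by
    rw [integral_add hh (integrable_const _)]; simp
  rw [integral_div, integral_div, integral_div, e₂, e₃ f hfi, e₃ g hgi] at key
  rw [abs_le] at key ⊢
  constructor <;> nlinarith [key.1, key.2]

/-- Covariance bound for complex exponentials under strong mixing. -/
lemma norm_covariance_exp_le (hm₁ : m₁ ≤ m₀) (hm₂ : m₂ ≤ m₀)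
    (hα : ∀ A B, MeasurableSet[m₁] A → MeasurableSet[m₂] B →
      |(P (A ∩ B)).toReal - (P A).toReal * (P B).toReal| ≤ α)
    (hf : Measurable[m₁] f) (hg : Measurable[m₂] g) :
    ‖∫ ω, exp ((f ω + g ω : ℝ) * I) ∂P -
      (∫ ω, exp ((f ω : ℝ) * I) ∂P) * ∫ ω, exp ((g ω : ℝ) * I) ∂P‖ ≤ 16 * α := by
  have hcos : ∀ x : ℝ, Real.cos x ∈ Set.Icc (-1 : ℝ) 1 := Real.cos_mem_Icc
  have hsin : ∀ x : ℝ, Real.sin x ∈ Set.Icc (-1 : ℝ) 1 := Real.sin_mem_Icc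
  have hcf := Real.measurable_cos.comp hf
  have hsf := Real.measurable_sin.comp hf
  have hcg := Real.measurable_cos.comp hg
  have hsg := Real.measurable_sin.comp hg
  have k₁ := abs_covariance_le_four_mul hm₁ hm₂ hα hcf (fun _ => hcos _) hcg (fun _ => hcos _)
  have k₂ := abs_covariance_le_four_mul hm₁ hm₂ hα hsf (fun _ => hsin _) hsg (fun _ => hsin _)
  have k₃ := abs_covariance_le_four_mul hm₁ hm₂ hα hsf (fun _ => hsin _) hcg (fun _ => hcos _)
  have k₄ := abs_covariance_le_four_mul hm₁ hm₂ hα hcf (fun _ => hcos _) hsg (fun _ => hsin _)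
  have hexp : ∀ u : Ω → ℝ, Measurable u → ∫ ω, exp ((u ω : ℝ) * I) ∂P =
      ((∫ ω, Real.cos (u ω) ∂P : ℝ) : ℂ) + ((∫ ω, Real.sin (u ω) ∂P : ℝ) : ℂ) * I := by
    intro u hu
    have ic : Integrable (fun ω => Real.cos (u ω)) P :=
      integrable_of_mem_Icc (Real.measurable_cos.comp hu) fun _ => hcos _
    have is : Integrable (fun ω => Real.sin (u ω)) P :=
      integrable_of_mem_Icc (Real.measurable_sin.comp hu) fun _ => hsin _
    simp_rw [exp_mul_I, ← ofReal_cos, ← ofReal_sin]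
    have ic' : Integrable (fun ω => (Real.cos (u ω) : ℂ)) P := ic.ofReal
    have is' : Integrable (fun ω => (Real.sin (u ω) : ℂ)) P := is.ofReal
    rw [integral_add ic' (is'.mul_const I), integral_mul_const, integral_complex_ofReal,
      integral_complex_ofReal]
  have hf' := hf.mono hm₁ le_rfl
  have hg' := hg.mono hm₂ le_rfl
  have hint : ∀ {u v : Ω → ℝ}, Measurable u → Measurable v → (∀ ω, u ω ∈ Set.Icc (-1 : ℝ) 1) →
      (∀ ω, v ω ∈ Set.Icc (-1 : ℝ) 1) → Integrable (fun ω => u ω * v ω) P :=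
    fun hu hv hu1 hv1 => (integrable_of_mem_Icc hv hv1).bdd_mul (c := 1)
      hu.aestronglyMeasurable (.of_forall fun ω => abs_le.2 (hu1 ω))
  rw [hexp f hf', hexp g hg', hexp (fun ω => f ω + g ω) (hf'.add hg')]
  simp_rw [Real.cos_add, Real.sin_add]
  have mcf := Real.measurable_cos.comp hf'
  have msf := Real.measurable_sin.comp hf'
  have mcg := Real.measurable_cos.comp hg'
  have msg := Real.measurable_sin.comp hg'
  have hcc : Integrable (fun ω => Real.cos (f ω) * Real.cos (g ω)) P :=
    hint mcf mcg (fun _ => hcos _) (fun _ => hcos _)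
  have hss : Integrable (fun ω => Real.sin (f ω) * Real.sin (g ω)) P :=
    hint msf msg (fun _ => hsin _) (fun _ => hsin _)
  have hsc : Integrable (fun ω => Real.sin (f ω) * Real.cos (g ω)) P :=
    hint msf mcg (fun _ => hsin _) (fun _ => hcos _)
  have hcs : Integrable (fun ω => Real.cos (f ω) * Real.sin (g ω)) P :=
    hint mcf msg (fun _ => hcos _) (fun _ => hsin _)
  rw [integral_sub hcc hss, integral_add hsc hcs]
  refine (norm_le_abs_re_add_abs_im _).trans ?_
  simp only [sub_re, add_re, mul_re, ofReal_re, ofReal_im, I_re, I_im, sub_im, add_im, mul_im,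
    Function.comp_apply] at k₁ k₂ k₃ k₄ ⊢
  ring_nf at k₁ k₂ k₃ k₄ ⊢
  rw [abs_le] at k₁ k₂ k₃ k₄
  refine (add_le_add (a := _) (b := 8 * α) (d := 8 * α) (abs_le.2 ⟨?_, ?_⟩)
    (abs_le.2 ⟨?_, ?_⟩)).trans (by linarith) <;>
  linarith [k₁.1, k₁.2, k₂.1, k₂.2, k₃.1, k₃.2, k₄.1, k₄.2]

end Mixing

lemma abs_le_alphaMix {Ω : Type*} [MeasurableSpace Ω] {P : Measure Ω} [IsProbabilityMeasure P]
    {d : ℕ} {X : ℕ → Ω → Fin d → ℝ} {j : ℕ} (hj : 1 ≤ j) (n : ℕ)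
    {A B : Set Ω}
    (hA : MeasurableSet[⨆ k ∈ Set.Icc 1 j, MeasurableSpace.comap (X k) inferInstance] A)
    (hB : MeasurableSet[⨆ k ∈ Set.Ici (j + n), MeasurableSpace.comap (X k) inferInstance] B) :
    |(P (A ∩ B)).toReal - (P A).toReal * (P B).toReal| ≤ alphaMix P X n := by
  have hbd : ∀ A B : Set Ω, |(P (A ∩ B)).toReal - (P A).toReal * (P B).toReal| ≤ 1 := by
    intro A B
    have h₁ : P.real (A ∩ B) ≤ 1 := measureReal_le_one
    have h₂ : P.real A * P.real B ≤ 1 :=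
      mul_le_one₀ measureReal_le_one measureReal_nonneg measureReal_le_one
    have h₃ : 0 ≤ P.real A * P.real B := mul_nonneg measureReal_nonneg measureReal_nonneg
    have h₄ : 0 ≤ P.real (A ∩ B) := measureReal_nonneg
    exact abs_sub_le_of_nonneg_of_le h₄ h₁ h₃ h₂
  refine le_trans ?_ (le_ciSup (ι := {j : ℕ // 1 ≤ j}) (f := fun j => alphaSig P
    (⨆ k ∈ Set.Icc 1 (j : ℕ), MeasurableSpace.comap (X k) inferInstance)
    (⨆ k ∈ Set.Ici ((j : ℕ) + n), MeasurableSpace.comap (X k) inferInstance)) ?_ ⟨j, hj⟩)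
  · refine le_csSup ⟨1, ?_⟩ ⟨A, B, hA, hB, rfl⟩
    rintro _ ⟨A, B, -, -, rfl⟩
    exact hbd A B
  · refine ⟨1, ?_⟩
    rintro _ ⟨j, rfl⟩
    exact Real.sSup_le (by rintro _ ⟨A, B, -, -, rfl⟩; exact hbd A B) zero_le_one

lemma measurable_of_mem_iSup_comap {d : ℕ} {Ω : Type*} {X : ℕ → Ω → Fin d → ℝ} {s : Set ℕ}
    {k : ℕ} (hk : k ∈ s) :
    Measurable[⨆ k ∈ s, MeasurableSpace.comap (X k) inferInstance] (X k) :=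
  Measurable.mono (comap_measurable (X k))
    (le_iSup₂ (f := fun k (_ : k ∈ s) => MeasurableSpace.comap (X k) inferInstance) k hk) le_rfl

lemma partialSum_eq_add_add {d : ℕ} {Ω : Type*} {X : ℕ → Ω → Fin d → ℝ} {m n : ℕ}
    (h : m ≤ n) (i : ℕ) (ω : Ω) :
    partialSum X n ω = partialSum X m ω + ∑ j ∈ Finset.Ioc m (min (m + i) n), X j ω +
      ∑ j ∈ Finset.Ioc (m + i) n, X j ω := by
  have e : Finset.Ioc (m + i) n = Finset.Ioc (min (m + i) n) n := by
    ext j; simp only [Finset.mem_Ioc]; omega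
  have e' : ∀ n, Finset.Icc 1 n = Finset.Ioc 0 n := fun n => by
    ext j; simp only [Finset.mem_Icc, Finset.mem_Ioc]; omega
  rw [partialSum, partialSum, e, e', e', Finset.sum_Ioc_consecutive _ (Nat.zero_le _) (by omega),
    Finset.sum_Ioc_consecutive _ (Nat.zero_le _) (by omega)]

section PartialSums

variable {d : ℕ} {Ω : Type*} [MeasurableSpace Ω] {P : Measure Ω} [IsProbabilityMeasure P]
  {X : ℕ → Ω → Fin d → ℝ} {A : ℕ → Matrix (Fin d) (Fin d) ℝ} {b : ℕ → Fin d → ℝ}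
  {μ : Measure (Fin d → ℝ)} [IsProbabilityMeasure μ]

/-- Slutsky's lemma: perturbations vanishing in probability do not change the weak limit. -/
lemma WeakLim.sub_of_tendstoInMeasure {Y R : ℕ → Ω → Fin d → ℝ} (hY : ∀ i, Measurable (Y i))
    (hR : ∀ i, Measurable (R i)) (h : WeakLim (fun i => P.map (Y i)) μ)
    (hR0 : TendstoInMeasure P R atTop 0) :
    WeakLim (fun i => P.map fun ω => Y i ω - R i ω) μ := by
  have hYd : TendstoInDistribution Y atTop (id : (Fin d → ℝ) → Fin d → ℝ) (fun _ => P) μ := by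
    refine ⟨fun i => (hY i).aemeasurable, aemeasurable_id, ?_⟩
    refine weakLim_iff.1 ?_
    simpa using h
  have hYR := tendstoInDistribution_of_tendstoInMeasure_sub (fun i ω => Y i ω - R i ω) id hYd
    (fun ε hε => (hR0 ε hε).congr fun i => by simp [edist_eq_enorm_sub])
    fun i => ((hY i).sub (hR i)).aemeasurable
  have := weakLim_iff.2 hYR.tendsto
  simpa using this

lemma Infinitesimal.eventually_sum (hinf : Infinitesimal P A X) (i : ℕ) {δ : ℝ} (hδ : 0 < δ) :
    ∃ N, ∀ n ≥ N, ∀ s ⊆ Finset.Icc 1 n, s.card ≤ i →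
      P.real {ω | δ ≤ ‖A n *ᵥ ∑ j ∈ s, X j ω‖} < δ := by
  have hi : (0 : ℝ) < i + 1 := by positivity
  obtain ⟨N, hN⟩ := hinf (δ / (i + 1)) (by positivity) (δ / (i + 1)) (by positivity)
  refine ⟨N, fun n hn s hs hcard => ?_⟩
  have hcard' : (s.card : ℝ) ≤ i := by exact_mod_cast hcard
  have hlt : (i : ℝ) * (δ / (i + 1)) < δ := by
    rw [mul_div_assoc', div_lt_iff₀ hi]; nlinarith
  have hsub : {ω | δ ≤ ‖A n *ᵥ ∑ j ∈ s, X j ω‖} ⊆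
      ⋃ j ∈ s, {ω | δ / (i + 1) ≤ ‖(A n).mulVec (X j ω)‖} := by
    intro ω hω
    by_contra hcon
    simp only [Set.mem_iUnion, Set.mem_ofPred_eq, not_exists, not_le] at hcon hω
    rw [Matrix.mulVec_sum] at hω
    have h₁ := (norm_sum_le s fun j => A n *ᵥ X j ω).trans
      (Finset.sum_le_card_nsmul s _ _ fun j hj => (hcon j hj).le)
    rw [nsmul_eq_mul] at h₁
    have : (s.card : ℝ) * (δ / (i + 1)) ≤ i * (δ / (i + 1)) := by gcongr
    linarith
  calc P.real {ω | δ ≤ ‖A n *ᵥ ∑ j ∈ s, X j ω‖}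
      ≤ P.real (⋃ j ∈ s, {ω | δ / (i + 1) ≤ ‖(A n).mulVec (X j ω)‖}) :=
        measureReal_mono hsub (measure_ne_top _ _)
    _ ≤ ∑ j ∈ s, P.real {ω | δ / (i + 1) ≤ ‖(A n).mulVec (X j ω)‖} :=
        measureReal_biUnion_finset_le _ _
    _ ≤ s.card • (δ / (i + 1)) := Finset.sum_le_card_nsmul _ _ _ fun j hj =>
        (hN n hn j (Finset.mem_Icc.1 (hs hj)).1 (Finset.mem_Icc.1 (hs hj)).2).le
    _ < δ := by
        rw [nsmul_eq_mul]
        refine lt_of_le_of_lt ?_ hlt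
        gcongr

lemma tendstoInMeasure_zero_of_le {R : ℕ → Ω → Fin d → ℝ}
    (h : ∀ i : ℕ, P.real {ω | 1 / ((i : ℝ) + 1) ≤ ‖R i ω‖} < 1 / ((i : ℝ) + 1)) :
    TendstoInMeasure P R atTop 0 := by
  rw [tendstoInMeasure_iff_measureReal_norm]
  intro ε hε
  have h0 := tendsto_one_div_add_atTop_nhds_zero_nat (𝕜 := ℝ)
  refine tendsto_of_tendsto_of_tendsto_of_le_of_le' tendsto_const_nhds h0
    (.of_forall fun _ => measureReal_nonneg) ?_
  filter_upwards [h0.eventually_le_const hε] with i hi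
  refine (measureReal_mono fun ω hω => ?_).trans (h i).le
  simp only [Set.mem_ofPred_eq, Pi.zero_apply, sub_zero] at hω ⊢
  exact hi.trans hω

lemma measurable_partialSum (hX : ∀ j, Measurable (X j)) (n : ℕ) : Measurable (partialSum X n) :=
  Finset.measurable_sum (Finset.Icc 1 n) fun j _ => hX j

lemma iSup_comap_le (hX : ∀ j, Measurable (X j)) (s : Set ℕ) :
    (⨆ k ∈ s, MeasurableSpace.comap (X k) inferInstance) ≤ ‹MeasurableSpace Ω› :=
  iSup₂_le fun k _ => (hX k).comap_le

/-- Approximate independence of past and future sums at the level of characteristic functions. -/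
lemma norm_cf_sub_le_alphaMix (hX : ∀ j, Measurable (X j)) {m : ℕ} (hm : 1 ≤ m) (i n : ℕ)
    (A₁ A₂ C : Matrix (Fin d) (Fin d) ℝ) (b₁ b₂ : Fin d → ℝ) (t : Fin d → ℝ) :
    ‖∫ ω, exp ((t ⬝ᵥ (C *ᵥ (A₁ *ᵥ partialSum X m ω + b₁) +
        (A₂ *ᵥ (∑ j ∈ Finset.Ioc (m + i) n, X j ω) + b₂)) : ℝ) * I) ∂P -
      (∫ ω, exp (((Cᵀ *ᵥ t) ⬝ᵥ (A₁ *ᵥ partialSum X m ω + b₁) : ℝ) * I) ∂P) *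
      ∫ ω, exp ((t ⬝ᵥ (A₂ *ᵥ (∑ j ∈ Finset.Ioc (m + i) n, X j ω) + b₂) : ℝ) * I) ∂P‖ ≤
      16 * alphaMix P X i := by
  have key := norm_covariance_exp_le (P := P) (iSup_comap_le hX (Set.Icc 1 m))
    (iSup_comap_le hX (Set.Ici (m + i))) (fun A B hA hB => abs_le_alphaMix hm i hA hB)
    (f := fun ω => (Cᵀ *ᵥ t) ⬝ᵥ (A₁ *ᵥ partialSum X m ω + b₁))
    (g := fun ω => t ⬝ᵥ (A₂ *ᵥ (∑ j ∈ Finset.Ioc (m + i) n, X j ω) + b₂)) ?_ ?_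
  · convert key using 8 with ω
    rw [dotProduct_add, Matrix.dotProduct_mulVec, Matrix.mulVec_transpose]
  · have h₁ : Measurable[⨆ k ∈ Set.Icc 1 m, MeasurableSpace.comap (X k) inferInstance]
        (partialSum X m) := by
      exact Finset.measurable_sum (Finset.Icc 1 m) fun j hj =>
        measurable_of_mem_iSup_comap (Finset.mem_Icc.1 hj)
    exact (by fun_prop : Continuous fun x => (Cᵀ *ᵥ t) ⬝ᵥ (A₁ *ᵥ x + b₁)).measurable.comp h₁
  · have h₁ : Measurable[⨆ k ∈ Set.Ici (m + i), MeasurableSpace.comap (X k) inferInstance]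
        (fun ω => ∑ j ∈ Finset.Ioc (m + i) n, X j ω) := by
      exact Finset.measurable_sum (Finset.Ioc (m + i) n) fun j hj =>
        measurable_of_mem_iSup_comap (Finset.mem_Ioc.1 hj).1.le
    exact (by fun_prop : Continuous fun x => t ⬝ᵥ (A₂ *ᵥ x + b₂)).measurable.comp h₁

/-- Subsequential limits of `A_n A_m⁻¹` with `m ≤ n`, `m → ∞`, exist and lie in `D(μ)`. -/
lemma exists_subseq_ratio_tendsto (hX : ∀ j, Measurable (X j)) (hA : ∀ n, IsUnit (A n))
    (hμ : IsFull μ) (hmix : StronglyMixing P X) (hinf : Infinitesimal P A X)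
    (hconv : WeakLim (fun n => P.map (fun ω => (A n).mulVec (partialSum X n ω) + b n)) μ)
    {m n : ℕ → ℕ} (hmn : ∀ k, m k ≤ n k) (hm1 : ∀ k, 1 ≤ m k) (hm : Tendsto m atTop atTop) :
    ∃ B ∈ UrbanikD μ, ∃ φ : ℕ → ℕ, StrictMono φ ∧
      Tendsto (fun k => A (n (φ k)) * (A (m (φ k)))⁻¹) atTop (𝓝 B) := by
  have hn : Tendsto n atTop atTop := tendsto_atTop_mono hmn hm
  obtain ⟨φ, hφ, hR⟩ := extraction_forall_of_eventually
    (P := fun i k => P.real {ω | 1 / ((i : ℝ) + 1) ≤ ‖A (n k) *ᵥ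
      ∑ j ∈ Finset.Ioc (m k) (min (m k + i) (n k)), X j ω‖} < 1 / ((i : ℝ) + 1)) fun i => by
    obtain ⟨N, hN⟩ := hinf.eventually_sum i (δ := 1 / ((i : ℝ) + 1)) (by positivity)
    filter_upwards [hn.eventually_ge_atTop N] with k hk
    refine hN _ hk _ (fun j hj => ?_) ?_
    · simp only [Finset.mem_Ioc, Finset.mem_Icc] at hj ⊢; omega
    · rw [Nat.card_Ioc]; omega
  let C : ℕ → Matrix (Fin d) (Fin d) ℝ := fun i => A (n (φ i)) * (A (m (φ i)))⁻¹
  let W : ℕ → Ω → Fin d → ℝ := fun i ω =>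
    A (m (φ i)) *ᵥ partialSum X (m (φ i)) ω + b (m (φ i))
  let V : ℕ → Ω → Fin d → ℝ := fun i ω =>
    A (n (φ i)) *ᵥ (∑ j ∈ Finset.Ioc (m (φ i) + i) (n (φ i)), X j ω) +
      (b (n (φ i)) - C i *ᵥ b (m (φ i)))
  let R : ℕ → Ω → Fin d → ℝ := fun i ω =>
    A (n (φ i)) *ᵥ ∑ j ∈ Finset.Ioc (m (φ i)) (min (m (φ i) + i) (n (φ i))), X j ω
  have hWm : ∀ i, Measurable (W i) := fun i =>
    ((measurable_mulVec _).comp (measurable_partialSum hX _)).add_const _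
  have hVm : ∀ i, Measurable (V i) := fun i =>
    ((measurable_mulVec _).comp (Finset.measurable_sum _ fun j _ => hX j)).add_const _
  have hRm : ∀ i, Measurable (R i) := fun i =>
    (measurable_mulVec _).comp (Finset.measurable_sum _ fun j _ => hX j)
  have hWV : ∀ i, Measurable fun ω => (W i ω, V i ω) := fun i => (hWm i).prodMk (hVm i)
  have hprob : ∀ i, IsProbabilityMeasure (P.map fun ω => (W i ω, V i ω)) := fun i =>
    Measure.isProbabilityMeasure_map (hWV i).aemeasurable
  have hfst : ∀ i, (P.map fun ω => (W i ω, V i ω)).fst = P.map (W i) := fun i =>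
    Measure.fst_map_prodMk (hVm i)
  have hsnd : ∀ i, (P.map fun ω => (W i ω, V i ω)).snd = P.map (V i) := fun i =>
    Measure.snd_map_prodMk (hWm i)
  have hmap : ∀ i, ((P.map fun ω => (W i ω, V i ω)).map fun p => C i *ᵥ p.1 + p.2) =
      P.map fun ω => C i *ᵥ W i ω + V i ω := fun i => by
    rw [Measure.map_map _ (hWV i)]
    · rfl
    · exact (by fun_prop : Continuous fun p : (Fin d → ℝ) × (Fin d → ℝ) =>
        C i *ᵥ p.1 + p.2).measurable
  have hCWV : ∀ i ω, C i *ᵥ W i ω + V i ω =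
      (A (n (φ i)) *ᵥ partialSum X (n (φ i)) ω + b (n (φ i))) - R i ω := by
    intro i ω
    have hCA : C i * A (m (φ i)) = A (n (φ i)) := by
      simp only [C]
      rw [Matrix.mul_assoc, Matrix.nonsing_inv_mul _ ((Matrix.isUnit_iff_isUnit_det _).1 (hA _)),
        Matrix.mul_one]
    simp only [W, V, R]
    rw [partialSum_eq_add_add (hmn (φ i)) i ω, Matrix.mulVec_add, Matrix.mulVec_mulVec, hCA,
      Matrix.mulVec_add, Matrix.mulVec_add]
    abel
  obtain ⟨B, hB, ψ, hψ, hlim⟩ := exists_subseq_tendsto_mem_UrbanikD (μ := μ) (C := C)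
    (ρ := fun i => P.map fun ω => (W i ω, V i ω)) (ε := fun i => 16 * alphaMix P X i) hμ
    (by
      simp_rw [hfst]
      exact hconv.comp (hm.comp hφ.tendsto_atTop))
    (by
      simp_rw [hmap, hCWV]
      exact (hconv.comp (hn.comp hφ.tendsto_atTop)).sub_of_tendstoInMeasure
        (fun i => ((measurable_mulVec _).comp (measurable_partialSum hX _)).add_const _) hRm
        (tendstoInMeasure_zero_of_le hR))
    (by simpa using hmix.const_mul 16)
    (fun i t => by
      have hCm : Measurable fun ω => C i *ᵥ W i ω + V i ω :=
        ((measurable_mulVec _).comp (hWm i)).add (hVm i)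
      rw [hmap, hfst, hsnd, cf_map P hCm, cf_map P (hWm i),
        cf_map P (hVm i)]
      exact norm_cf_sub_le_alphaMix hX (hm1 _) i _ _ _ _ _ _ t)
  exact ⟨B, hB, φ ∘ ψ, hφ.comp hψ, hlim⟩

end PartialSums

section Norming

variable {d : ℕ} {Ω : Type*} [MeasurableSpace Ω] {P : Measure Ω} [IsProbabilityMeasure P]
  {X : ℕ → Ω → Fin d → ℝ} {A : ℕ → Matrix (Fin d) (Fin d) ℝ} {b : ℕ → Fin d → ℝ}
  {μ : Measure (Fin d → ℝ)} [IsProbabilityMeasure μ]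

lemma exists_unit_limit {E : Type*} [NormedAddCommGroup E] [NormedSpace ℝ E] [ProperSpace E]
    (x : ℕ → E) (hx : ∀ k, x k ≠ 0) :
    ∃ y : E, ‖y‖ = 1 ∧ ∃ φ : ℕ → ℕ, StrictMono φ ∧
      Tendsto (fun k => ‖x (φ k)‖⁻¹ • x (φ k)) atTop (𝓝 y) := by
  obtain ⟨y, hy, φ, hφ, hlim⟩ := (isCompact_sphere (0 : E) 1).tendsto_subseq
    (x := fun k => ‖x k‖⁻¹ • x k) fun k => by simp [norm_smul, norm_ne_zero_iff.2 (hx k)]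
  exact ⟨y, by simpa using hy, φ, hφ, hlim⟩

/-- If a limit of normalized subsequences of `A` kills all the summands, the limit law cannot be
full. -/
lemma eq_zero_of_mulVec_ae_eq_zero (hX : ∀ j, Measurable (X j)) (hA : ∀ n, IsUnit (A n))
    (hμ : IsFull μ)
    (hconv : WeakLim (fun n => P.map (fun ω => (A n).mulVec (partialSum X n ω) + b n)) μ)
    {D : Matrix (Fin d) (Fin d) ℝ} (hD : ∀ j, 1 ≤ j → ∀ᵐ ω ∂P, D *ᵥ X j ω = 0) : D = 0 := by
  by_contra hD0
  obtain ⟨i, hi⟩ : ∃ i, D i ≠ 0 := by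
    by_contra! h
    exact hD0 (funext h)
  have hS : ∀ m, ∀ᵐ ω ∂P, D i ⬝ᵥ partialSum X m ω = 0 := fun m => by
    have : ∀ᵐ ω ∂P, ∀ j : ℕ, 1 ≤ j → D *ᵥ X j ω = 0 :=
      ae_all_iff.2 fun j => by
        by_cases hj : 1 ≤ j
        · simpa [hj] using hD j hj
        · simp [hj]
    filter_upwards [this] with ω hω
    rw [partialSum, dotProduct_sum]
    exact Finset.sum_eq_zero fun j hj => congrFun (hω j (Finset.mem_Icc.1 hj).1) i
  have hdet : ∀ m, IsUnit (A m).det := fun m => (Matrix.isUnit_iff_isUnit_det _).1 (hA m)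
  let w : ℕ → Fin d → ℝ := fun m => D i ᵥ* (A m)⁻¹
  have hwA : ∀ m, w m ᵥ* A m = D i := fun m => by
    simp only [w]
    rw [Matrix.vecMul_vecMul, Matrix.nonsing_inv_mul _ (hdet m), Matrix.vecMul_one]
  have hw0 : ∀ m, w m ≠ 0 := fun m h => hi (by rw [← hwA m, h, Matrix.zero_vecMul])
  obtain ⟨y, hy, φ, hφ, hlim⟩ := exists_unit_limit w hw0
  have hmeas : ∀ m, Measurable fun ω => (A m).mulVec (partialSum X m ω) + b m := fun m =>
    ((measurable_mulVec _).comp (measurable_partialSum hX _)).add_const _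
  have := fun m => Measure.isProbabilityMeasure_map (μ := P) (hmeas m).aemeasurable
  have hone : ∀ (c : ℝ) m,
      ‖cf (P.map fun ω => (A m).mulVec (partialSum X m ω) + b m) (c • w m)‖ = 1 := by
    intro c m
    rw [cf_map P (hmeas m), integral_congr_ae (g := fun _ => exp (((c • w m) ⬝ᵥ b m : ℝ) * I))]
    · simp [norm_exp_ofReal_mul_I, -ofReal_mul]
    · filter_upwards [hS m] with ω hω
      rw [dotProduct_add, smul_dotProduct, Matrix.dotProduct_mulVec, hwA, hω]
      simp
  have hy0 : y = 0 := hμ.eq_zero_of_norm_cf fun s => by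
    have h := ((hconv.comp hφ.tendsto_atTop).tendsto_cf (hlim.const_smul s)).norm
    simp_rw [smul_smul, hone] at h
    exact (tendsto_nhds_unique h tendsto_const_nhds).ge
  simp [hy0] at hy

/-- The norming matrices tend to zero. -/
lemma tendsto_norming_zero (hX : ∀ j, Measurable (X j)) (hA : ∀ n, IsUnit (A n))
    (hμ : IsFull μ) (hinf : Infinitesimal P A X)
    (hconv : WeakLim (fun n => P.map (fun ω => (A n).mulVec (partialSum X n ω) + b n)) μ) :
    Tendsto A atTop (𝓝 0) := by
  refine Metric.tendsto_atTop.2 ?_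
  by_contra hne
  push Not at hne
  obtain ⟨ε, hε, hfreq⟩ := hne
  simp_rw [dist_zero_right] at hfreq
  obtain ⟨φ, hφ, hεφ⟩ := extraction_of_frequently_atTop (frequently_atTop.2 hfreq)
  have hpos : ∀ k, 0 < ‖A (φ k)‖ := fun k => hε.trans_le (hεφ k)
  have : ProperSpace (Matrix (Fin d) (Fin d) ℝ) := FiniteDimensional.proper ℝ _
  obtain ⟨D, hD, ψ, hψ, hlim⟩ := exists_unit_limit (fun k => A (φ k)) fun k =>
    norm_pos_iff.1 (hpos k)
  have hD0 : D = 0 := eq_zero_of_mulVec_ae_eq_zero hX hA hμ hconv fun j hj => by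
    have h₁ : TendstoInMeasure P (fun k ω => (‖A (φ (ψ k))‖⁻¹ • A (φ (ψ k))) *ᵥ X j ω) atTop
        fun ω => D *ᵥ X j ω := by
      refine tendstoInMeasure_of_tendsto_ae
        (fun k => ((measurable_mulVec _).comp (hX j)).aestronglyMeasurable)
        (.of_forall fun ω => ?_)
      exact ((by fun_prop : Continuous fun M : Matrix (Fin d) (Fin d) ℝ =>
        M *ᵥ X j ω).tendsto D).comp hlim
    have h₂ : TendstoInMeasure P (fun k ω => (‖A (φ (ψ k))‖⁻¹ • A (φ (ψ k))) *ᵥ X j ω) atTop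
        fun _ => 0 := by
      rw [tendstoInMeasure_iff_measureReal_norm]
      intro η hη
      rw [Metric.tendsto_atTop]
      intro δ hδ
      obtain ⟨N, hN⟩ := hinf (η * ε) (by positivity) δ hδ
      refine ⟨max N j, fun k hk => ?_⟩
      have hk' : k ≤ φ (ψ k) := (hφ.comp hψ).id_le k
      rw [Real.dist_eq, sub_zero, abs_of_nonneg measureReal_nonneg]
      refine (measureReal_mono fun ω hω => ?_).trans_lt
        (hN (φ (ψ k)) (by omega) j hj (by omega))
      simp only [Set.mem_ofPred_eq, sub_zero, Matrix.smul_mulVec, norm_smul, norm_inv,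
        norm_norm] at hω ⊢
      rw [inv_mul_eq_div, le_div_iff₀ (hpos _)] at hω
      exact (mul_le_mul_of_nonneg_left (hεφ _) hη.le).trans hω
    exact tendstoInMeasure_ae_unique h₁ h₂
  simp [hD0] at hD

end Norming

section CompactSemigroup

variable {R : Type*} [NormedRing R] {H : Set R}

/-- In a compact semigroup of a normed ring, an element whose powers do not tend to zero has a
left multiple which is a nonzero idempotent. -/
lemma exists_idempotent_eq_mul_of_not_tendsto_pow (hc : IsCompact H)
    (hmul : ∀ S ∈ H, ∀ T ∈ H, S * T ∈ H) {T : R} (hT : T ∈ H)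
    (hpow : ¬Tendsto (fun k => T ^ k) atTop (𝓝 0)) :
    ∃ S ∈ H, S * T ∈ H ∧ S * T ≠ 0 ∧ (S * T) * (S * T) = S * T := by
  have hTk : ∀ k, T ^ (k + 1) ∈ H := fun k => by
    induction k with
    | zero => simpa using hT
    | succ k ih => rw [pow_succ]; exact hmul _ ih _ hT
  let s : Set R := Set.range fun k : ℕ => T ^ (k + 2)
  have hsH : closure s ⊆ H :=
    closure_minimal (by rintro _ ⟨k, rfl⟩; exact hTk _) hc.isClosed
  have hsc : IsCompact (closure s) := hc.of_isClosed_subset isClosed_closure hsH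
  have hsT : closure s ⊆ (fun S => S * T) '' H := by
    refine closure_minimal ?_ (hc.image (by fun_prop)).isClosed
    rintro _ ⟨k, rfl⟩
    exact ⟨T ^ (k + 1), hTk k, (pow_succ _ _).symm⟩
  have hsmul : ∀ x ∈ closure s, ∀ y ∈ closure s, x * y ∈ closure s := by
    intro x hx y hy
    refine map_mem_closure₂ continuous_mul hx hy ?_
    rintro _ ⟨k, rfl⟩ _ ⟨l, rfl⟩
    exact ⟨k + l + 2, by simp only; rw [← pow_add]; congr 1; omega⟩
  obtain ⟨K, hK, hKK⟩ := exists_idempotent_in_compact_subsemigroup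
    (fun r : R => (continuous_mul_const r)) (closure s)
    (Set.Nonempty.closure (Set.range_nonempty _)) hsc hsmul
  obtain ⟨S, hS, rfl⟩ := hsT hK
  refine ⟨S, hS, hsH hK, fun h0 => hpow ?_, hKK⟩
  simp only [h0] at hK
  obtain ⟨c, hc0, hcb⟩ := hc.isBounded.exists_pos_norm_le
  rw [Metric.tendsto_atTop]
  intro ε hε
  obtain ⟨_, ⟨k, rfl⟩, hk⟩ := Metric.mem_closure_iff.1 hK (ε / c) (by positivity)
  rw [dist_zero_left, lt_div_iff₀ hc0] at hk
  refine ⟨k + 3, fun n hn => ?_⟩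
  rw [dist_zero_right, show n = (n - (k + 3) + 1) + (k + 2) by omega, pow_add]
  refine (norm_mul_le _ _).trans_lt (lt_of_le_of_lt ?_ hk)
  rw [mul_comm]
  exact mul_le_mul_of_nonneg_left (hcb _ (hTk _)) (norm_nonneg _)

/-- A compact monoid of a normed ring whose only idempotents are zero and the unit `J`, and through
which one can pass from `J` to `0` by vanishing steps, has topologically nilpotent elements
arbitrarily close to `J`. -/
lemma exists_near_tendsto_pow_zero (hc : IsCompact H) (hmul : ∀ S ∈ H, ∀ T ∈ H, S * T ∈ H)
    (h0 : 0 ∈ H) {J : R} (hJ : J ∈ H) (hJJ : J * J = J) (hJ0 : J ≠ 0)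
    (hmin : ∀ K ∈ H, K * K = K → K = 0 ∨ K = J) {F : ℕ → ℕ → R} (hFJ : ∀ m, F m m = J)
    (hF0 : ∀ m, Tendsto (F m) atTop (𝓝 0))
    (hF : ∀ m n : ℕ → ℕ, (∀ k, m k ≤ n k) → (∀ k, 1 ≤ m k) → Tendsto m atTop atTop →
      ∃ B ∈ H, ∃ φ : ℕ → ℕ, StrictMono φ ∧ Tendsto (fun k => F (m (φ k)) (n (φ k))) atTop (𝓝 B) ∧
        Tendsto (fun k => F (m (φ k)) (n (φ k) + 1)) atTop (𝓝 B)) {ε : ℝ} (hε : 0 < ε) :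
    ∃ T ∈ H, ‖T - J‖ < ε ∧ Tendsto (fun k => T ^ k) atTop (𝓝 0) := by
  by_contra! hcon
  let G : Set R := {T | T ∈ H ∧ ∃ S ∈ H, S * T = J}
  have hJG : J ∈ G := ⟨hJ, J, hJ, hJJ⟩
  have hGn : G.Nonempty := ⟨J, hJG⟩
  have hunit : ∀ T ∈ H, ¬Tendsto (fun k => T ^ k) atTop (𝓝 0) → T ∈ G := by
    intro T hT hpow
    obtain ⟨S, hS, hST, hne, hid⟩ := exists_idempotent_eq_mul_of_not_tendsto_pow hc hmul hT hpow
    exact ⟨hT, S, hS, (hmin _ hST hid).resolve_left hne⟩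
  obtain ⟨c, hc0, hcb⟩ := hc.isBounded.exists_pos_norm_le
  obtain ⟨δ, hδ, hcδ⟩ : ∃ δ : ℝ, 0 < δ ∧ c * (2 * δ) = ε :=
    ⟨ε / (2 * c), by positivity, by field_simp⟩
  have hiso : ∀ T ∈ H, Metric.infDist T G < 2 * δ → T ∈ G := by
    intro T hT hd
    obtain ⟨T', ⟨-, S, hS, hST'⟩, hd'⟩ := (Metric.infDist_lt_iff hGn).1 hd
    have hnear : ‖S * T - J‖ < ε := by
      rw [← hST', ← mul_sub, ← hcδ]
      rw [dist_eq_norm] at hd'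
      exact (norm_mul_le _ _).trans_lt
        (mul_lt_mul_of_le_of_lt_of_nonneg_of_pos (hcb S hS) hd' (norm_nonneg _) hc0)
    obtain ⟨-, S', hS', hS'T⟩ := hunit _ (hmul S hS T hT) (hcon _ (hmul S hS T hT) hnear)
    exact ⟨hT, S' * S, hmul _ hS' _ hS, by rw [mul_assoc, hS'T]⟩
  have h0G : 2 * δ ≤ Metric.infDist 0 G := by
    by_contra! h
    obtain ⟨-, S, -, hS⟩ := hiso 0 h0 h
    exact hJ0 (by rw [← hS, mul_zero])
  have hcont : Continuous fun T => Metric.infDist T G := Metric.continuous_infDist_pt G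
  have hstep : ∀ m, ∃ n, m ≤ n ∧ Metric.infDist (F m n) G < δ ∧
      δ ≤ Metric.infDist (F m (n + 1)) G := by
    intro m
    by_contra! h
    have hall : ∀ n, m ≤ n → Metric.infDist (F m n) G < δ := fun n hn => by
      induction n, hn using Nat.le_induction with
      | base => rw [hFJ, Metric.infDist_zero_of_mem hJG]; exact hδ
      | succ n hn ih => exact h n hn ih
    have hle : Metric.infDist 0 G ≤ δ :=
      le_of_tendsto ((hcont.tendsto 0).comp (hF0 m)) <| by
        filter_upwards [eventually_ge_atTop m] with n hn using (hall n hn).le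
    linarith
  choose n hmn hlt hge using hstep
  obtain ⟨B, hB, φ, -, h₁, h₂⟩ := hF (fun k => k + 1) (fun k => n (k + 1)) (fun k => hmn _)
    (fun k => by omega) (tendsto_add_atTop_nat 1)
  have hBle : Metric.infDist B G ≤ δ :=
    le_of_tendsto ((hcont.tendsto B).comp h₁) (.of_forall fun k => (hlt _).le)
  have hBge : δ ≤ Metric.infDist B G :=
    ge_of_tendsto ((hcont.tendsto B).comp h₂) (.of_forall fun k => hge _)
  rw [Metric.infDist_zero_of_mem (hiso B hB (by linarith))] at hBge
  linarith

lemma add_pow_succ_of_mul_eq_zero {R : Type*} [Ring R] {S T : R} (hST : S * T = 0)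
    (hTS : T * S = 0) (k : ℕ) : (S + T) ^ (k + 1) = S ^ (k + 1) + T ^ (k + 1) := by
  induction k with
  | zero => simp
  | succ k ih =>
    rw [pow_succ, ih, add_mul, mul_add, mul_add, pow_succ S k, pow_succ T k, mul_assoc _ S T,
      mul_assoc _ T S, hST, hTS, mul_zero, mul_zero, add_zero, zero_add, ← pow_succ, ← pow_succ,
      ← pow_succ, ← pow_succ]

end CompactSemigroup

lemma Matrix.rank_lt_of_idempotent {d : ℕ} {J K : Matrix (Fin d) (Fin d) ℝ} (hJK : J * K = K)
    (hKJ : K * J = K) (hKK : K * K = K) (hne : K ≠ J) : K.rank < J.rank := by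
  have hle : LinearMap.range K.mulVecLin ≤ LinearMap.range J.mulVecLin := by
    rintro _ ⟨x, rfl⟩
    exact ⟨K *ᵥ x, by simp [Matrix.mulVec_mulVec, hJK]⟩
  refine Submodule.finrank_lt_finrank_of_lt (lt_of_le_of_ne hle fun heq => hne ?_)
  rw [← hKJ]
  refine Matrix.ext_of_mulVec_single fun i => ?_
  obtain ⟨y, hy⟩ : J *ᵥ Pi.single i 1 ∈ LinearMap.range K.mulVecLin := heq ▸ ⟨_, rfl⟩
  rw [← Matrix.mulVec_mulVec, ← hy, Matrix.mulVecLin_apply, Matrix.mulVec_mulVec, hKK]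

section Approximation

variable {d : ℕ} {μ : Measure (Fin d → ℝ)} [IsProbabilityMeasure μ]

/-- Approximation by topologically nilpotent elements reduces to minimal idempotents. -/
lemma UrbanikD.exists_near_of_forall_minimal
    (hmin : ∀ J ∈ UrbanikD μ, J ≠ 0 → J * J = J →
      (∀ K ∈ UrbanikD μ, J * K = K → K * J = K → K * K = K → K = 0 ∨ K = J) → ∀ ε > (0 : ℝ),
      ∃ T ∈ UrbanikD μ, J * T = T ∧ T * J = T ∧ ‖T - J‖ < ε ∧
        Tendsto (fun k => T ^ k) atTop (𝓝 0))
    {J : Matrix (Fin d) (Fin d) ℝ} (hJ : J ∈ UrbanikD μ) (hJJ : J * J = J) {ε : ℝ} (hε : 0 < ε) :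
    ∃ T ∈ UrbanikD μ, J * T = T ∧ T * J = T ∧ ‖T - J‖ < ε ∧
      Tendsto (fun k => T ^ k) atTop (𝓝 0) := by
  induction hr : J.rank using Nat.strong_induction_on generalizing J ε with
  | _ r ih =>
  subst hr
  by_cases hJ0 : J = 0
  · subst hJ0
    refine ⟨0, hJ, by simp, by simp, by simpa using hε, ?_⟩
    exact tendsto_const_nhds.congr' (by
      filter_upwards [eventually_ge_atTop 1] with k hk
      rw [zero_pow (by omega)])
  by_cases hK : ∀ K ∈ UrbanikD μ, J * K = K → K * J = K → K * K = K → K = 0 ∨ K = J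
  · exact hmin J hJ hJ0 hJJ hK ε hε
  push Not at hK
  obtain ⟨K, hKD, hJK, hKJ, hKK, hK0, hKne⟩ := hK
  have hLD : J - K ∈ UrbanikD μ := by
    have := UrbanikD.mul_mem hJ (UrbanikD.one_sub_mem hKD hKK)
    rwa [mul_sub, mul_one, hJK] at this
  have hLL : (J - K) * (J - K) = J - K := by
    rw [sub_mul, mul_sub, mul_sub, hJJ, hJK, hKJ, hKK]; abel
  have hJL : J * (J - K) = J - K := by rw [mul_sub, hJJ, hJK]
  have hLJ : (J - K) * J = J - K := by rw [sub_mul, hJJ, hKJ]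
  have hKL : K * (J - K) = 0 := by rw [mul_sub, hKJ, hKK, sub_self]
  have hLK : (J - K) * K = 0 := by rw [sub_mul, hJK, hKK, sub_self]
  obtain ⟨S, hS, hKS, hSK, hSn, hSp⟩ := ih _ (Matrix.rank_lt_of_idempotent hJK hKJ hKK hKne)
    hKD hKK (half_pos hε) rfl
  obtain ⟨T, hT, hLT, hTL, hTn, hTp⟩ := ih _ (Matrix.rank_lt_of_idempotent hJL hLJ hLL
    (by simpa using hK0)) hLD hLL (half_pos hε) rfl
  have hKT : K * T = 0 := by rw [← hLT, ← mul_assoc, hKL, zero_mul]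
  have hTK : T * K = 0 := by rw [← hTL, mul_assoc, hLK, mul_zero]
  refine ⟨S + T, UrbanikD.add_mem hKD hKK hS hT hKS hSK hKT hTK, ?_, ?_, ?_, ?_⟩
  · rw [mul_add]
    congr 1
    · rw [← hKS, ← mul_assoc, hJK]
    · rw [← hLT, ← mul_assoc, hJL]
  · rw [add_mul]
    congr 1
    · rw [← hSK, mul_assoc, hKJ]
    · rw [← hTL, mul_assoc, hLJ]
  · rw [show S + T - J = (S - K) + (T - (J - K)) by abel]
    exact (norm_add_le _ _).trans_lt (by linarith)
  · have hST : S * T = 0 := by rw [← hSK, mul_assoc, hKT, mul_zero]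
    have hTS : T * S = 0 := by rw [← hKS, ← mul_assoc, hTK, zero_mul]
    rw [← tendsto_add_atTop_iff_nat 1] at hSp hTp ⊢
    simp_rw [add_pow_succ_of_mul_eq_zero hST hTS]
    simpa using hSp.add hTp

variable {Ω : Type*} [MeasurableSpace Ω] {P : Measure Ω} [IsProbabilityMeasure P]
  {X : ℕ → Ω → Fin d → ℝ} {A : ℕ → Matrix (Fin d) (Fin d) ℝ} {b : ℕ → Fin d → ℝ}

lemma exists_near_of_minimal (hX : ∀ j, Measurable (X j)) (hA : ∀ n, IsUnit (A n))
    (hArat : Tendsto (fun n => A (n + 1) * (A n)⁻¹) atTop (𝓝 1))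
    (hμ : IsFull μ) (hmix : StronglyMixing P X) (hinf : Infinitesimal P A X)
    (hconv : WeakLim (fun n => P.map (fun ω => (A n).mulVec (partialSum X n ω) + b n)) μ)
    {J : Matrix (Fin d) (Fin d) ℝ} (hJ : J ∈ UrbanikD μ) (hJ0 : J ≠ 0) (hJJ : J * J = J)
    (hmin : ∀ K ∈ UrbanikD μ, J * K = K → K * J = K → K * K = K → K = 0 ∨ K = J)
    {ε : ℝ} (hε : 0 < ε) :
    ∃ T ∈ UrbanikD μ, J * T = T ∧ T * J = T ∧ ‖T - J‖ < ε ∧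
      Tendsto (fun k => T ^ k) atTop (𝓝 0) := by
  let H : Set (Matrix (Fin d) (Fin d) ℝ) := {T | T ∈ UrbanikD μ ∧ J * T = T ∧ T * J = T}
  have hc : IsCompact H := by
    refine (isCompact_UrbanikD hμ).inter_right ((isClosed_eq ?_ ?_).inter (isClosed_eq ?_ ?_)) <;>
    fun_prop
  have hdet : ∀ m, IsUnit (A m).det := fun m => (Matrix.isUnit_iff_isUnit_det _).1 (hA m)
  obtain ⟨T, ⟨hT, hJT, hTJ⟩, hTn, hTp⟩ := exists_near_tendsto_pow_zero hc
    (fun S hS T hT => ⟨UrbanikD.mul_mem hS.1 hT.1, by rw [← mul_assoc, hS.2.1],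
      by rw [mul_assoc, hT.2.2]⟩)
    ⟨UrbanikD.zero_mem, mul_zero _, zero_mul _⟩ (J := J) ⟨hJ, hJJ, hJJ⟩ hJJ hJ0
    (fun K hK hKK => hmin K hK.1 hK.2.1 hK.2.2 hKK)
    (F := fun m n => J * (A n * (A m)⁻¹) * J)
    (fun m => by rw [Matrix.mul_nonsing_inv _ (hdet m), mul_one, hJJ])
    (fun m => by
      have hcont : Continuous fun M : Matrix (Fin d) (Fin d) ℝ => J * (M * (A m)⁻¹) * J := by
        fun_prop
      have := (hcont.tendsto 0).comp (tendsto_norming_zero hX hA hμ hinf hconv)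
      simp only [zero_mul, mul_zero] at this
      exact this)
    (fun m n hmn hm1 hm => by
      obtain ⟨B, hB, φ, hφ, hlim⟩ :=
        exists_subseq_ratio_tendsto hX hA hμ hmix hinf hconv hmn hm1 hm
      have hcont : Continuous fun M : Matrix (Fin d) (Fin d) ℝ => J * M * J := by fun_prop
      have hlim' : Tendsto (fun k => A (n (φ k) + 1) * (A (m (φ k)))⁻¹) atTop (𝓝 B) := by
        have hn : Tendsto (fun k => n (φ k)) atTop atTop :=
          (tendsto_atTop_mono hmn hm).comp hφ.tendsto_atTop
        have := (hArat.comp hn).mul hlim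
        rw [one_mul] at this
        refine this.congr fun k => ?_
        simp only [Function.comp_apply]
        rw [mul_assoc, ← mul_assoc _ (A (n (φ k))), Matrix.nonsing_inv_mul _ (hdet _), one_mul]
      refine ⟨J * B * J, ⟨UrbanikD.mul_mem (UrbanikD.mul_mem hJ hB) hJ, ?_, ?_⟩, φ, hφ,
        (hcont.tendsto B).comp hlim, (hcont.tendsto B).comp hlim'⟩
      · rw [← mul_assoc, ← mul_assoc, hJJ]
      · rw [mul_assoc, hJJ])
    hε
  exact ⟨T, hT, hJT, hTJ, hTn, hTp⟩

lemma exists_approximating_sequence (hX : ∀ j, Measurable (X j)) (hA : ∀ n, IsUnit (A n))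
    (hArat : Tendsto (fun n => A (n + 1) * (A n)⁻¹) atTop (𝓝 1))
    (hμ : IsFull μ) (hmix : StronglyMixing P X) (hinf : Infinitesimal P A X)
    (hconv : WeakLim (fun n => P.map (fun ω => (A n).mulVec (partialSum X n ω) + b n)) μ)
    {J : Matrix (Fin d) (Fin d) ℝ} (hJ : J ∈ UrbanikD μ) (hJJ : J * J = J) :
    ∃ T : ℕ → Matrix (Fin d) (Fin d) ℝ, (∀ n, T n ∈ UrbanikD μ) ∧ (∀ n, J * T n = T n) ∧
      (∀ n, T n * J = T n) ∧ Tendsto T atTop (𝓝 J) ∧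
      ∀ n, Tendsto (fun k => T n ^ k) atTop (𝓝 0) := by
  have h : ∀ n : ℕ, ∃ T ∈ UrbanikD μ, J * T = T ∧ T * J = T ∧ ‖T - J‖ < 1 / ((n : ℝ) + 1) ∧
      Tendsto (fun k => T ^ k) atTop (𝓝 0) := fun n =>
    UrbanikD.exists_near_of_forall_minimal
      (fun J hJ hJ0 hJJ hmin ε hε =>
        exists_near_of_minimal hX hA hArat hμ hmix hinf hconv hJ hJ0 hJJ hmin hε)
      hJ hJJ (by positivity)
  choose T hT hJT hTJ hTn hTp using h
  refine ⟨T, hT, hJT, hTJ, ?_, hTp⟩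
  exact tendsto_iff_norm_sub_tendsto_zero.2
    (squeeze_zero (fun _ => norm_nonneg _) (fun n => (hTn n).le)
      tendsto_one_div_add_atTop_nhds_zero_nat)

end Approximation

end

/-- **Lemma 3.** Under strong mixing, infinitesimality, weak convergence to a full law,
with invertible `A_n` satisfying `A_{n+1} A_n⁻¹ → I`: for every nonzero idempotent
`J ∈ D(μ)` there are `T_n ∈ D(μ)` with `J T_n = T_n J = T_n`, `T_n → J`, and
`T_n^k → 0` as `k → ∞` for each fixed `n`. -/
theorem exists_approximating_contractions
    {d : ℕ} {Ω : Type*} [MeasurableSpace Ω] (P : Measure Ω) [IsProbabilityMeasure P]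
    (X : ℕ → Ω → (Fin d → ℝ)) (hXmeas : ∀ j, Measurable (X j))
    (A : ℕ → Matrix (Fin d) (Fin d) ℝ) (hAinv : ∀ n, IsUnit (A n)) (b : ℕ → Fin d → ℝ)
    (hArat : Tendsto (fun n => A (n + 1) * (A n)⁻¹) atTop (𝓝 1))
    (μ : Measure (Fin d → ℝ)) [IsProbabilityMeasure μ] (hfull : IsFull μ)
    (hmix : StronglyMixing P X)
    (hinf : Infinitesimal P A X)
    (hconv : WeakLim (fun n => P.map (fun ω => (A n).mulVec (partialSum X n ω) + b n)) μ) :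
    ∀ J ∈ UrbanikD μ, J ≠ 0 → J * J = J →
      ∃ T : ℕ → Matrix (Fin d) (Fin d) ℝ,
        (∀ n, T n ∈ UrbanikD μ) ∧
        (∀ n, J * T n = T n) ∧ (∀ n, T n * J = T n) ∧
        Tendsto T atTop (𝓝 J) ∧
        ∀ n, Tendsto (fun k => T n ^ k) atTop (𝓝 0) := by
  exact fun J hJ _ hJJ =>
    exists_approximating_sequence hXmeas hAinv hArat hfull hmix hinf hconv hJ hJJ
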